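/- arXiv:1707.01151 — 5 statements merged into one kernel-verified Lean document; each statement's English description precedes it below -/
import Mathlib

section
/- For almost every pair (P, λ) ∈ P_d × (0,1), with respect to the Lebesgue measure on ℂ^d × ℝ restricted to P_d × (0,1), the outer billiard map T_{P,λ} of P with contraction λ is asymptotically periodic. -/
open MeasureTheory Set Filter Metric

noncomputable section

/-- Planar cross product of two complex numbers viewed as vectors of `ℝ²`. -/
def cross (z w : ℂ) : ℝ := z.re * w.im - z.im * w.re

/-- `v` is the tuple of vertices of a convex `d`-gon, cyclically ordered
(counterclockwise): every vertex lies strictly to the left of every directed edge. -/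
def IsConvexPolygon {d : ℕ} [NeZero d] (v : Fin d → ℂ) : Prop :=
  ∀ i j : Fin d, j ≠ i → j ≠ i + 1 → 0 < cross (v (i + 1) - v i) (v j - v i)

/-- The polygon `P`, as a subset of the plane. -/
def polygonSet {d : ℕ} (v : Fin d → ℂ) : Set ℂ := convexHull ℝ (Set.range v)

/-- The open cone `A k`: points `z` outside `P` whose supporting line (oriented from `z`
towards the polygon, with the interior of `P` on its left) meets `P` exactly at the
vertex `v k`. -/
def cone {d : ℕ} (v : Fin d → ℂ) (k : Fin d) : Set ℂ :=
  {z | ∀ j : Fin d, j ≠ k → 0 < cross (v k - z) (v j - z)}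

/-- The singular set `S_P`: the points of `X = ℂ \ P` lying in no cone, i.e. whose
supporting line contains an edge of the polygon. -/
def singSet {d : ℕ} (v : Fin d → ℂ) : Set ℂ :=
  {z | z ∉ polygonSet v ∧ ∀ k : Fin d, z ∉ cone v k}

/-- The outer billiard map of the polygon with vertices `v` with contraction `lam`:
on the cone `A k` it is `z ↦ -lam • z + (1+lam) • v k` (extended arbitrarily outside
the union of the cones, which is its actual domain `X \ S_P`). -/
def billiardMap {d : ℕ} (v : Fin d → ℂ) (lam : ℝ) (z : ℂ) : ℂ :=
  haveI := Classical.propDecidable (∃ k : Fin d, z ∈ cone v k)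
  if h : ∃ k : Fin d, z ∈ cone v k then -(lam : ℂ) * z + (1 + (lam : ℂ)) * v h.choose
  else z

/-- A point is non-singular if its whole forward orbit stays in the union of the open
cones, i.e. never meets the singular set. -/
def NonSingular {d : ℕ} (v : Fin d → ℂ) (lam : ℝ) (z : ℂ) : Prop :=
  ∀ n : ℕ, (billiardMap v lam)^[n] z ∈ ⋃ k : Fin d, cone v k

/-- The ω-limit set of the forward orbit of `z` under `f`. -/
def omegaSet (f : ℂ → ℂ) (z : ℂ) : Set ℂ :=
  ⋂ m : ℕ, closure ((fun n : ℕ => f^[n] z) '' {n | m ≤ n})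

/-- The outer billiard map with contraction is asymptotically periodic: it has finitely
many periodic orbits (equivalently, periodic points) and the ω-limit set of every
non-singular point is a periodic orbit. -/
def AsymptoticallyPeriodic {d : ℕ} (v : Fin d → ℂ) (lam : ℝ) : Prop :=
  {z : ℂ | NonSingular v lam z ∧ ∃ p : ℕ, 1 ≤ p ∧ (billiardMap v lam)^[p] z = z}.Finite ∧
  ∀ z : ℂ, NonSingular v lam z → ∃ w : ℂ, NonSingular v lam w ∧
    (∃ p : ℕ, 1 ≤ p ∧ (billiardMap v lam)^[p] w = w) ∧
    omegaSet (billiardMap v lam) z = Set.range fun n : ℕ => (billiardMap v lam)^[n] w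

/-! ### Basic geometry -/

/-- The affine function `z ↦ cross (v k - z) (v j - z)`. -/
def hh {d : ℕ} (v : Fin d → ℂ) (k j : Fin d) (z : ℂ) : ℝ := cross (v k - z) (v j - z)

/-- One branch of the map. -/
def stepMap {d : ℕ} (v : Fin d → ℂ) (lam : ℝ) (k : Fin d) (z : ℂ) : ℂ :=
  -(lam : ℂ) * z + (1 + (lam : ℂ)) * v k

theorem cross_bound (z w : ℂ) : |cross z w| ≤ 2 * (‖z‖ * ‖w‖) := by
  unfold cross
  have h1 : |z.re * w.im| ≤ ‖z‖ * ‖w‖ := by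
    rw [abs_mul]
    exact mul_le_mul (Complex.abs_re_le_norm z) (Complex.abs_im_le_norm w) (abs_nonneg _)
      (norm_nonneg _)
  have h2 : |z.im * w.re| ≤ ‖z‖ * ‖w‖ := by
    rw [abs_mul]
    exact mul_le_mul (Complex.abs_im_le_norm z) (Complex.abs_re_le_norm w) (abs_nonneg _)
      (norm_nonneg _)
  have := abs_sub (z.re * w.im) (z.im * w.re)
  linarith

theorem hh_step {d : ℕ} (v : Fin d → ℂ) (lam : ℝ) (k j i : Fin d) (z : ℂ) :
    hh v k j (stepMap v lam i z) = -lam * hh v k j z + (1 + lam) * hh v k j (v i) := by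
  simp [hh, cross, stepMap]; ring

theorem hh_sub {d : ℕ} (v : Fin d → ℂ) (k j : Fin d) (z w : ℂ) :
    hh v k j z - hh v k j w = cross (w - z) (v j - v k) := by
  simp [hh, cross]; ring

theorem hh_anti {d : ℕ} (v : Fin d → ℂ) (k j : Fin d) (z : ℂ) :
    hh v k j z = - hh v j k z := by
  simp [hh, cross]; ring

theorem hh_self_left {d : ℕ} (v : Fin d → ℂ) (k j : Fin d) : hh v k j (v k) = 0 := by
  simp [hh, cross]

theorem hh_self_right {d : ℕ} (v : Fin d → ℂ) (k j : Fin d) : hh v k j (v j) = 0 := by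
  simp [hh, cross]

theorem mem_cone_iff {d : ℕ} (v : Fin d → ℂ) (k : Fin d) (z : ℂ) :
    z ∈ cone v k ↔ ∀ j, j ≠ k → 0 < hh v k j z := Iff.rfl

theorem cone_unique {d : ℕ} {v : Fin d → ℂ} {k j : Fin d} {z : ℂ} (hk : z ∈ cone v k)
    (hj : z ∈ cone v j) : k = j := by
  by_contra hne
  have h1 := (mem_cone_iff v k z).1 hk j (Ne.symm hne)
  have h2 := (mem_cone_iff v j z).1 hj k hne
  rw [hh_anti] at h1
  linarith

theorem billiard_of_mem {d : ℕ} {v : Fin d → ℂ} {k : Fin d} {z : ℂ} (lam : ℝ)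
    (hk : z ∈ cone v k) : billiardMap v lam z = stepMap v lam k z := by
  have h : ∃ k : Fin d, z ∈ cone v k := ⟨k, hk⟩
  unfold billiardMap stepMap
  rw [dif_pos h, cone_unique h.choose_spec hk]

theorem continuous_hh {d : ℕ} (v : Fin d → ℂ) (k j : Fin d) : Continuous (hh v k j) := by
  unfold hh cross; fun_prop

theorem continuous_stepMap {d : ℕ} (v : Fin d → ℂ) (lam : ℝ) (k : Fin d) :
    Continuous (stepMap v lam k) := by
  unfold stepMap; fun_prop

theorem stepMap_sub {d : ℕ} (v : Fin d → ℂ) (lam : ℝ) (k : Fin d) (z w : ℂ) :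
    stepMap v lam k z - stepMap v lam k w = -(lam : ℂ) * (z - w) := by
  unfold stepMap; ring

/-- The open square. -/
def bsq (R : ℝ) : Set ℂ := {z | |z.re| < R ∧ |z.im| < R}

theorem bsq_norm {R : ℝ} {z : ℂ} (hz : z ∈ bsq R) : ‖z‖ ≤ 2 * R := by
  have := Complex.norm_le_abs_re_add_abs_im z
  have h1 := hz.1
  have h2 := hz.2
  linarith

theorem stepMap_sq {d : ℕ} {v : Fin d → ℂ} {lam : ℝ} {R : ℝ} (h0 : 0 < lam)
    (hR : ∀ i, ‖v i‖ * (1 + lam) < (1 - lam) * R) (k : Fin d) {z : ℂ} (hz : z ∈ bsq R) :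
    stepMap v lam k z ∈ bsq R := by
  obtain ⟨h1, h2⟩ := hz
  have hk := hR k
  have hr := Complex.abs_re_le_norm (v k)
  have hi := Complex.abs_im_le_norm (v k)
  rw [abs_le] at hr hi
  rw [abs_lt] at h1 h2
  constructor
  · simp only [stepMap, Complex.add_re, Complex.mul_re, Complex.neg_re, Complex.ofReal_re,
      Complex.neg_im, Complex.ofReal_im, Complex.one_re, Complex.add_im, Complex.one_im]
    rw [abs_lt]
    constructor <;> nlinarith
  · simp only [stepMap, Complex.add_re, Complex.mul_im, Complex.neg_re, Complex.ofReal_re,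
      Complex.neg_im, Complex.ofReal_im, Complex.one_re, Complex.add_im, Complex.one_im]
    rw [abs_lt]
    constructor <;> nlinarith

/-- Orbit along a prescribed word. -/
def path {d : ℕ} (v : Fin d → ℂ) (lam : ℝ) (ω : ℕ → Fin d) (z : ℂ) : ℕ → ℂ
  | 0 => z
  | n + 1 => stepMap v lam (ω n) (path v lam ω z n)

/-- The word `ω` is followed by `z` for `n` steps. -/
def Adm {d : ℕ} (v : Fin d → ℂ) (lam : ℝ) (ω : ℕ → Fin d) (z : ℂ) (n : ℕ) : Prop :=
  ∀ i < n, path v lam ω z i ∈ cone v (ω i)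

theorem path_sq {d : ℕ} {v : Fin d → ℂ} {lam : ℝ} {R : ℝ} (h0 : 0 < lam)
    (hR : ∀ i, ‖v i‖ * (1 + lam) < (1 - lam) * R) (ω : ℕ → Fin d) {z : ℂ} (hz : z ∈ bsq R) (n : ℕ) :
    path v lam ω z n ∈ bsq R := by
  induction n with
  | zero => exact hz
  | succ n ih => exact stepMap_sq h0 hR _ ih

theorem path_shift {d : ℕ} (v : Fin d → ℂ) (lam : ℝ) (ω : ℕ → Fin d) (z : ℂ) (m n : ℕ) :
    path v lam ω z (m + n) = path v lam (fun i => ω (m + i)) (path v lam ω z m) n := by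
  induction n with
  | zero => rfl
  | succ n ih =>
    show stepMap v lam (ω (m + n)) (path v lam ω z (m + n)) = _
    rw [ih]; rfl

theorem Adm.shift {d : ℕ} {v : Fin d → ℂ} {lam : ℝ} {ω : ℕ → Fin d} {z : ℂ} {m n : ℕ}
    (h : Adm v lam ω z (m + n)) :
    Adm v lam (fun i => ω (m + i)) (path v lam ω z m) n := by
  intro i hi
  rw [← path_shift]
  exact h (m + i) (by omega)

theorem Adm.mono {d : ℕ} {v : Fin d → ℂ} {lam : ℝ} {ω : ℕ → Fin d} {z : ℂ} {m n : ℕ}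
    (h : Adm v lam ω z n) (hmn : m ≤ n) : Adm v lam ω z m := fun i hi => h i (by omega)

theorem path_congr {d : ℕ} (v : Fin d → ℂ) (lam : ℝ) {ω ω' : ℕ → Fin d} (z : ℂ) {n : ℕ}
    (h : ∀ i < n, ω i = ω' i) : path v lam ω z n = path v lam ω' z n := by
  induction n with
  | zero => rfl
  | succ n ih =>
    show stepMap v lam (ω n) _ = stepMap v lam (ω' n) _
    rw [ih (fun i hi => h i (by omega)), h n (by omega)]

theorem Adm.congr {d : ℕ} {v : Fin d → ℂ} {lam : ℝ} {ω ω' : ℕ → Fin d} {z : ℂ} {n : ℕ}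
    (ha : Adm v lam ω z n) (h : ∀ i < n, ω i = ω' i) : Adm v lam ω' z n := by
  intro i hi
  rw [← path_congr v lam z (fun l hl => h l (by omega)), ← h i hi]
  exact ha i hi

theorem path_sub {d : ℕ} (v : Fin d → ℂ) (lam : ℝ) (ω : ℕ → Fin d) (z w : ℂ) (n : ℕ) :
    path v lam ω z n - path v lam ω w n = (-(lam : ℂ)) ^ n * (z - w) := by
  induction n with
  | zero => simp [path]
  | succ n ih =>
    show stepMap v lam (ω n) _ - stepMap v lam (ω n) _ = _
    rw [stepMap_sub, ih]; ring

theorem hh_path {d : ℕ} (v : Fin d → ℂ) (lam : ℝ) (ω : ℕ → Fin d) (z : ℂ) (k j : Fin d) (n : ℕ) :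
    hh v k j (path v lam ω z n) = (-lam) ^ n * hh v k j z +
      (1 + lam) * ∑ s ∈ Finset.range n, (-lam) ^ s * hh v k j (v (ω (n - 1 - s))) := by
  induction n with
  | zero => simp [path]
  | succ n ih =>
    show hh v k j (stepMap v lam (ω n) _) = _
    rw [hh_step, ih, Finset.sum_range_succ']
    have : ∑ s ∈ Finset.range n, (-lam) ^ (s + 1) * hh v k j (v (ω (n + 1 - 1 - (s + 1))))
        = -lam * ∑ s ∈ Finset.range n, (-lam) ^ s * hh v k j (v (ω (n - 1 - s))) := by
      rw [Finset.mul_sum]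
      refine Finset.sum_congr rfl fun s _ => ?_
      rw [show n + 1 - 1 - (s + 1) = n - 1 - s by omega]
      ring
    rw [this]
    simp
    ring

/-- The itinerary of a nonsingular point. -/
theorem NonSingular.exists_word {d : ℕ} {v : Fin d → ℂ} {lam : ℝ} {z : ℂ}
    (h : NonSingular v lam z) : ∃ ω : ℕ → Fin d, (∀ n, Adm v lam ω z n) ∧
      ∀ n, (billiardMap v lam)^[n] z = path v lam ω z n := by
  have h' : ∀ n, ∃ k, (billiardMap v lam)^[n] z ∈ cone v k := fun n => by
    simpa using h n
  choose ω hω using h'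
  have hp : ∀ n, (billiardMap v lam)^[n] z = path v lam ω z n := by
    intro n
    induction n with
    | zero => rfl
    | succ n ih =>
      rw [Function.iterate_succ_apply', billiard_of_mem lam (hω n), ih]
      rfl
  exact ⟨ω, fun n i _ => by rw [← hp]; exact hω i, hp⟩

theorem NonSingular.iterate {d : ℕ} {v : Fin d → ℂ} {lam : ℝ} {z : ℂ}
    (h : NonSingular v lam z) (m : ℕ) : NonSingular v lam ((billiardMap v lam)^[m] z) := by
  intro n
  rw [← Function.iterate_add_apply]
  exact h _

/-- No three vertices are collinear. -/
def NC {d : ℕ} (v : Fin d → ℂ) : Prop :=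
  ∀ i j k : Fin d, i ≠ j → i ≠ k → j ≠ k → hh v j k (v i) ≠ 0

/-! ### Asymptotic periodicity from a gap around the singular lines -/

theorem omegaSet_eq (f : ℂ → ℂ) (z w : ℂ) (J p : ℕ) (hp : 1 ≤ p) (hw : f^[p] w = w)
    (hlim : Tendsto (fun t => f^[J + t] z - f^[t] w) atTop (nhds 0)) :
    omegaSet f z = Set.range fun n : ℕ => f^[n] w := by
  have hper : ∀ i j, f^[i + p * j] w = f^[i] w := by
    intro i j
    rw [Function.iterate_add_apply, Function.iterate_mul]
    congr 1
    exact Function.iterate_fixed hw j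
  have hfin : (Set.range fun n : ℕ => f^[n] w).Finite := by
    refine ((Set.finite_lt_nat p).image (fun n => f^[n] w)).subset ?_
    rintro _ ⟨n, rfl⟩
    refine ⟨n % p, Nat.mod_lt _ hp, ?_⟩
    have := hper (n % p) (n / p)
    rw [Nat.mod_add_div] at this
    exact this.symm
  apply Set.Subset.antisymm
  · intro x hx
    by_contra hxr
    have hopen : IsOpen (Set.range fun n : ℕ => f^[n] w)ᶜ := hfin.isClosed.isOpen_compl
    obtain ⟨ε, hε, hball⟩ := Metric.isOpen_iff.1 hopen x hxr
    obtain ⟨M, hM⟩ := (Metric.tendsto_atTop.1 hlim) (ε / 2) (by positivity)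
    have hx' := Set.mem_iInter.1 hx (J + M)
    obtain ⟨y, ⟨n, hn, rfl⟩, hy⟩ := Metric.mem_closure_iff.1 hx' (ε / 2) (by positivity)
    have hn' : J + M ≤ n := hn
    have h1 := hM (n - J) (by omega)
    rw [show J + (n - J) = n by omega, dist_zero_right, ← dist_eq_norm] at h1
    have : f^[n - J] w ∈ ball x ε := by
      rw [mem_ball]
      have h2 := dist_triangle_left (f^[n - J] w) x (f^[n] z)
      have h3 : dist x (f^[n] z) < ε / 2 := hy
      rw [dist_comm x] at h3
      linarith
    exact hball this ⟨n - J, rfl⟩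
  · rintro _ ⟨i, rfl⟩
    refine Set.mem_iInter.2 fun m => Metric.mem_closure_iff.2 fun ε hε => ?_
    obtain ⟨M, hM⟩ := (Metric.tendsto_atTop.1 hlim) ε hε
    have hbig : m + M ≤ i + p * (m + M) := by nlinarith
    refine ⟨_, ⟨J + (i + p * (m + M)), ?_, rfl⟩, ?_⟩
    · show m ≤ _
      omega
    · have h1 := hM (i + p * (m + M)) (by omega)
      rw [dist_zero_right, ← dist_eq_norm, hper, dist_comm] at h1
      exact h1

/-- Points all of whose orbit stays `ρ` away (in the sense of `hh`) from all lines. -/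
def Gap {d : ℕ} (v : Fin d → ℂ) (lam ρ : ℝ) (z : ℂ) : Prop :=
  NonSingular v lam z ∧ ∀ t k j, k ≠ j → ρ ≤ |hh v k j ((billiardMap v lam)^[t] z)|

theorem exists_edge_bound {d : ℕ} (v : Fin d → ℂ) : ∃ M : ℝ, 0 < M ∧ ∀ k j, ‖v j - v k‖ ≤ M := by
  refine ⟨1 + ∑ k, ∑ j, ‖v j - v k‖, by positivity, fun k j => ?_⟩
  have h1 : ‖v j - v k‖ ≤ ∑ j, ‖v j - v k‖ :=
    Finset.single_le_sum (f := fun j => ‖v j - v k‖) (fun _ _ => norm_nonneg _) (Finset.mem_univ j)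
  have h2 : ∑ j, ‖v j - v k‖ ≤ ∑ k, ∑ j, ‖v j - v k‖ :=
    Finset.single_le_sum (f := fun k => ∑ j, ‖v j - v k‖) (fun _ _ => by positivity)
      (Finset.mem_univ k)
  linarith

theorem cone_of_close {d : ℕ} {v : Fin d → ℂ} {M ρ : ℝ} (hM : ∀ k j, ‖v j - v k‖ ≤ M)
    (hM0 : 0 < M)
    {z w : ℂ} {k : Fin d} (hz : z ∈ cone v k) (hzg : ∀ k j, k ≠ j → ρ ≤ |hh v k j z|)
    (hd : dist z w < ρ / (2 * M)) : w ∈ cone v k := by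
  rw [mem_cone_iff] at hz ⊢
  intro j hj
  have h1 := hz j hj
  have h2 := hzg k j (Ne.symm hj)
  rw [abs_of_pos h1] at h2
  have h3 := hh_sub v k j z w
  have h4 := cross_bound (w - z) (v j - v k)
  rw [← h3] at h4
  have h5 := hM k j
  rw [dist_comm, dist_eq_norm, lt_div_iff₀ (by positivity)] at hd
  have h6 : ‖w - z‖ * ‖v j - v k‖ ≤ ‖w - z‖ * M := by gcongr
  have h7 := le_abs_self (hh v k j z - hh v k j w)
  linarith

theorem gap_contract {d : ℕ} {v : Fin d → ℂ} {lam : ℝ} (h0 : 0 < lam) (h1 : lam < 1) {M ρ : ℝ}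
    (hM : ∀ k j, ‖v j - v k‖ ≤ M) (hM0 : 0 < M) {z w : ℂ} (hz : Gap v lam ρ z)
    (hd : dist z w < ρ / (2 * M)) (t : ℕ) :
    dist ((billiardMap v lam)^[t] z) ((billiardMap v lam)^[t] w) = lam ^ t * dist z w ∧
    (billiardMap v lam)^[t] w ∈ ⋃ k : Fin d, cone v k := by
  have key : ∀ t, dist ((billiardMap v lam)^[t] z) ((billiardMap v lam)^[t] w)
      = lam ^ t * dist z w → ∃ k, (billiardMap v lam)^[t] z ∈ cone v k ∧
        (billiardMap v lam)^[t] w ∈ cone v k := by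
    intro t ht
    obtain ⟨k, hk⟩ := Set.mem_iUnion.1 (hz.1 t)
    refine ⟨k, hk, cone_of_close hM hM0 hk (hz.2 t) ?_⟩
    rw [ht]
    have : lam ^ t ≤ 1 := pow_le_one₀ h0.le h1.le
    have h3 : lam ^ t * dist z w ≤ 1 * dist z w := by gcongr
    linarith
  have main : ∀ t, dist ((billiardMap v lam)^[t] z) ((billiardMap v lam)^[t] w)
      = lam ^ t * dist z w := by
    intro t
    induction t with
    | zero => simp
    | succ t ih =>
      obtain ⟨k, hk, hk'⟩ := key t ih
      rw [Function.iterate_succ_apply', Function.iterate_succ_apply', billiard_of_mem lam hk,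
        billiard_of_mem lam hk', dist_eq_norm, stepMap_sub, norm_mul, ← dist_eq_norm, ih]
      simp [abs_of_pos h0]
      ring
  obtain ⟨k, _, hk'⟩ := key t (main t)
  exact ⟨main t, Set.mem_iUnion.2 ⟨k, hk'⟩⟩

theorem exists_close (s : Set ℂ) (hs : Bornology.IsBounded s) (x : ℕ → ℂ) (hx : ∀ n, x n ∈ s)
    (δ : ℝ) (hδ : 0 < δ) : ∃ a b, a < b ∧ dist (x a) (x b) < δ := by
  obtain ⟨l, -, φ, hφ, hl⟩ := tendsto_subseq_of_bounded hs hx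
  obtain ⟨N, hN⟩ := (Metric.tendsto_atTop.1 hl) (δ / 2) (by positivity)
  refine ⟨φ N, φ (N + 1), hφ (by omega), ?_⟩
  have h1 := hN N le_rfl
  have h2 := hN (N + 1) (by omega)
  have := dist_triangle_right (x (φ N)) (x (φ (N + 1))) l
  simp only [Function.comp] at h1 h2
  linarith

theorem separated_finite (s : Set ℂ) (hs : Bornology.IsBounded s) (δ : ℝ) (hδ : 0 < δ)
    (hsep : ∀ x ∈ s, ∀ y ∈ s, dist x y < δ → x = y) : s.Finite := by
  by_contra hinf
  have hinf : s.Infinite := hinf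
  let x := hinf.natEmbedding s
  obtain ⟨a, b, hab, hd⟩ := exists_close s hs (fun n => (x n : ℂ)) (fun n => (x n).2) δ hδ
  have := hsep _ (x a).2 _ (x b).2 hd
  have := x.injective (Subtype.ext this)
  omega

theorem bsq_bounded (R : ℝ) : Bornology.IsBounded (bsq R) := by
  refine (Metric.isBounded_closedBall (x := (0:ℂ)) (r := 2 * R)).subset fun z hz => ?_
  rw [mem_closedBall_zero_iff]
  exact bsq_norm hz

theorem gap_limit {d : ℕ} {v : Fin d → ℂ} {lam : ℝ} (h0 : 0 < lam) (h1 : lam < 1) {M ρ : ℝ}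
    (hρ : 0 < ρ)
    (hM : ∀ k j, ‖v j - v k‖ ≤ M) (hM0 : 0 < M) {y : ℂ} (hy : Gap v lam ρ y) {p : ℕ} (hp : 1 ≤ p)
    (hd : dist y ((billiardMap v lam)^[p] y) < ρ / (2 * M)) :
    ∃ w, NonSingular v lam w ∧ (billiardMap v lam)^[p] w = w ∧
      ∃ J, Tendsto (fun t => (billiardMap v lam)^[J + t] y - (billiardMap v lam)^[t] w)
        atTop (nhds 0) := by
  set T := billiardMap v lam with hT
  have hδ : 0 < ρ / (2 * M) := by positivity
  have hg : ∀ m, Gap v lam ρ (T^[m] y) := fun m =>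
    ⟨hy.1.iterate m, fun t k j hkj => by
      rw [← hT, ← Function.iterate_add_apply]; exact hy.2 _ k j hkj⟩
  have hdist : ∀ t, dist (T^[t] y) (T^[t + p] y) = lam ^ t * dist y (T^[p] y) := fun t => by
    rw [Function.iterate_add_apply]
    exact (gap_contract h0 h1 hM hM0 hy hd t).1
  have hlp : lam ^ p < 1 := pow_lt_one₀ h0.le h1 (by omega)
  have hcau : CauchySeq (fun j => T^[p * j] y) := by
    refine cauchySeq_of_le_geometric (lam ^ p) (dist y (T^[p] y)) hlp fun j => ?_
    have := hdist (p * j)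
    rw [show p * (j + 1) = p * j + p by ring, this, pow_mul, mul_comm]
  obtain ⟨w, hw⟩ := cauchySeq_tendsto_of_complete hcau
  obtain ⟨N, hN⟩ := (Metric.tendsto_atTop.1 hw) _ hδ
  have hcl : ∀ j ≥ N, ∀ t, dist (T^[t] (T^[p * j] y)) (T^[t] w) = lam ^ t * dist (T^[p * j] y) w ∧
      T^[t] w ∈ ⋃ k : Fin d, cone v k := fun j hj t => 
    gap_contract h0 h1 hM hM0 (hg _) (hN j hj) t
  refine ⟨w, fun t => (hcl N le_rfl t).2, ?_, p * N, ?_⟩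
  · have hlim1 : Tendsto (fun j => T^[p * (j + 1)] y) atTop (nhds w) :=
      hw.comp (tendsto_add_atTop_nat 1)
    have hlim2 : Tendsto (fun j => T^[p * (j + 1)] y) atTop (nhds (T^[p] w)) := by
      rw [tendsto_iff_dist_tendsto_zero]
      have h3 : Tendsto (fun j => lam ^ p * dist (T^[p * j] y) w) atTop (nhds 0) := by
        simpa using (tendsto_iff_dist_tendsto_zero.1 hw).const_mul (lam ^ p)
      refine h3.congr' ?_
      filter_upwards [eventually_ge_atTop N] with j hj
      rw [← (hcl j hj p).1, ← Function.iterate_add_apply, show p + p * j = p * (j + 1) by ring]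
    exact tendsto_nhds_unique hlim2 hlim1
  · rw [tendsto_zero_iff_norm_tendsto_zero]
    have h3 : Tendsto (fun t => lam ^ t * dist (T^[p * N] y) w) atTop (nhds 0) := by
      simpa using (tendsto_pow_atTop_nhds_zero_of_lt_one h0.le h1).mul_const (dist (T^[p * N] y) w)
    refine h3.congr fun t => ?_
    rw [← (hcl N le_rfl t).1, ← dist_eq_norm, ← Function.iterate_add_apply, add_comm t]

theorem eventually_bsq {d : ℕ} {v : Fin d → ℂ} {lam : ℝ} (h0 : 0 < lam) (h1 : lam < 1) {R : ℝ}
    (hR : ∀ i, ‖v i‖ * (1 + lam) < (1 - lam) * R) (ω : ℕ → Fin d) (z : ℂ) :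
    ∃ n0, ∀ n ≥ n0, path v lam ω z n ∈ bsq R := by
  obtain ⟨i0⟩ : Nonempty (Fin d) := ⟨ω 0⟩
  obtain ⟨c, hc⟩ : ∃ c, c < (1 - lam) * R ∧ ∀ i, ‖v i‖ * (1 + lam) ≤ c := by
    obtain ⟨i, -, hi⟩ := Finset.exists_max_image Finset.univ (fun i => ‖v i‖ * (1 + lam))
      ⟨i0, Finset.mem_univ _⟩
    exact ⟨_, hR i, fun j => hi j (Finset.mem_univ _)⟩
  have hb : ∀ n, ‖path v lam ω z n‖ ≤ lam ^ n * ‖z‖ + c / (1 - lam) := by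
    intro n
    have hcn : 0 ≤ c := le_trans (by positivity) (hc.2 i0)
    have h1l : 0 < 1 - lam := by linarith
    induction n with
    | zero => simp [path]; positivity
    | succ n ih =>
      show ‖stepMap v lam (ω n) _‖ ≤ _
      unfold stepMap
      refine (norm_add_le _ _).trans ?_
      have e1 : ‖(1 + (lam : ℂ)) * v (ω n)‖ ≤ c := by
        rw [norm_mul, show ((1:ℂ) + lam) = ((1 + lam : ℝ) : ℂ) by push_cast; rfl,
          Complex.norm_real, Real.norm_eq_abs, abs_of_pos (by linarith), mul_comm]
        exact hc.2 _
      have e2 : ‖-(lam : ℂ) * path v lam ω z n‖ = lam * ‖path v lam ω z n‖ := by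
        rw [norm_mul, norm_neg, Complex.norm_real, Real.norm_eq_abs, abs_of_pos h0]
      have e3 : lam * ‖path v lam ω z n‖ ≤ lam * (lam ^ n * ‖z‖ + c / (1 - lam)) := by gcongr
      have e4 : lam * (c / (1 - lam)) + c = c / (1 - lam) := by field_simp; ring
      rw [e2, pow_succ]
      nlinarith
  have hlt : c / (1 - lam) < R := by
    rw [div_lt_iff₀ (by linarith)]; linarith [hc.1]
  have hlim : Tendsto (fun n => lam ^ n * ‖z‖ + c / (1 - lam)) atTop (nhds (c / (1 - lam))) := by
    simpa using ((tendsto_pow_atTop_nhds_zero_of_lt_one h0.le h1).mul_const ‖z‖).add_const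
      (c / (1 - lam))
  obtain ⟨n0, hn0⟩ := eventually_atTop.1 (hlim.eventually_lt_const hlt)
  refine ⟨n0, fun n hn => ?_⟩
  have := lt_of_le_of_lt (hb n) (hn0 n hn)
  exact ⟨(Complex.abs_re_le_norm _).trans_lt this, (Complex.abs_im_le_norm _).trans_lt this⟩

/-- The main criterion for asymptotic periodicity. -/
theorem asymptoticallyPeriodic_of_gap {d : ℕ} {v : Fin d → ℂ} {lam : ℝ} (h0 : 0 < lam)
    (h1 : lam < 1) {R : ℝ} (hR : ∀ i, ‖v i‖ * (1 + lam) < (1 - lam) * R) (n : ℕ) (ρ : ℝ)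
    (hρ : 0 < ρ)
    (hgap : ∀ ω z, z ∈ bsq R → Adm v lam ω z n → ∀ k j, k ≠ j →
      ρ ≤ |hh v k j (path v lam ω z n)|) : AsymptoticallyPeriodic v lam := by
  obtain ⟨M, hM0, hM⟩ := exists_edge_bound v
  have hδ : 0 < ρ / (2 * M) := by positivity
  set T := billiardMap v lam with hT
  -- eventually in the square with gap
  have hev : ∀ z, NonSingular v lam z → ∃ n0, ∀ m ≥ n0, T^[m] z ∈ bsq R ∧ Gap v lam ρ (T^[m] z) := by
    intro z hz
    obtain ⟨ω, hω, hp⟩ := hz.exists_word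
    obtain ⟨n0, hn0⟩ := eventually_bsq h0 h1 hR ω z
    refine ⟨n0 + n, fun m hm => ⟨by rw [hT, hp]; exact hn0 m (by omega), hz.iterate m, ?_⟩⟩
    intro t k j hkj
    rw [← hT, ← Function.iterate_add_apply, hT, hp]
    have e : t + m = (t + m - n) + n := by omega
    rw [e, path_shift]
    exact hgap _ _ (hn0 _ (by omega)) (Adm.shift (by rw [← e]; exact hω _)) k j hkj
  constructor
  · have hsub : ∀ z, (NonSingular v lam z ∧ ∃ p : ℕ, 1 ≤ p ∧ T^[p] z = z) →
        z ∈ bsq R ∧ Gap v lam ρ z := by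
      rintro z ⟨hz, p, hp, hpz⟩
      obtain ⟨n0, hn0⟩ := hev z hz
      have := hn0 (p * n0) (by nlinarith)
      rw [Function.iterate_mul, Function.iterate_fixed hpz n0] at this
      exact this
    refine separated_finite _ ((bsq_bounded R).subset fun z hz => (hsub z hz).1) _ hδ ?_
    intro x hx y hy hd
    have hxg := (hsub x hx).2
    obtain ⟨-, p, hp, hpx⟩ := hx
    obtain ⟨-, q, hq, hqy⟩ := hy
    have := (gap_contract h0 h1 hM hM0 hxg hd (p * q)).1
    have ex : T^[p * q] x = x := by rw [Function.iterate_mul]; exact Function.iterate_fixed hpx q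
    have ey : T^[p * q] y = y := by
      rw [mul_comm, Function.iterate_mul]; exact Function.iterate_fixed hqy p
    rw [← hT, ex, ey] at this
    have hl : lam ^ (p * q) < 1 := pow_lt_one₀ h0.le h1 (by positivity)
    have hnn := dist_nonneg (x := x) (y := y)
    have : dist x y = 0 := by nlinarith
    exact dist_eq_zero.1 this
  · intro z hz
    obtain ⟨n0, hn0⟩ := hev z hz
    obtain ⟨a, b, hab, hd⟩ := exists_close _ (bsq_bounded R) (fun m => T^[n0 + m] z)
      (fun m => (hn0 (n0 + m) (by omega)).1) _ hδ
    have hb : T^[n0 + b] z = T^[b - a] (T^[n0 + a] z) := by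
      rw [← Function.iterate_add_apply, show b - a + (n0 + a) = n0 + b by omega]
    simp only [hb] at hd
    obtain ⟨w, hw1, hw2, J, hJ⟩ := gap_limit h0 h1 hρ hM hM0 (hn0 (n0 + a) (by omega)).2
      (p := b - a) (by omega) hd
    refine ⟨w, hw1, ⟨b - a, by omega, hw2⟩, ?_⟩
    refine omegaSet_eq T z w (n0 + a + J) (b - a) (by omega) hw2 ?_
    refine hJ.congr fun t => ?_
    rw [← hT, ← Function.iterate_add_apply, show J + t + (n0 + a) = n0 + a + J + t by ring]

/-! ### Subexponential growth of the number of words -/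

/-- Realizable words of length `n`. -/
def WW {d : ℕ} (v : Fin d → ℂ) (lam R : ℝ) (n : ℕ) : Set (Fin n → Fin d) :=
  {u | ∃ ω z, z ∈ bsq R ∧ Adm v lam ω z n ∧ ∀ i : Fin n, ω i = u i}

/-- Sign vectors. -/
def SS {d : ℕ} (v : Fin d → ℂ) (x z : ℂ) : Fin d → Fin d → SignType :=
  fun k j => SignType.sign (cross (z - x) (v j - v k))

theorem SS_step {d : ℕ} (v : Fin d → ℂ) {lam : ℝ} (h0 : 0 < lam) (i : Fin d) (x z : ℂ) :
    SS v (stepMap v lam i x) (stepMap v lam i z) = fun k j => - SS v x z k j := by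
  funext k j
  unfold SS
  rw [stepMap_sub]
  have : cross (-(lam : ℂ) * (z - x)) (v j - v k) = lam * (-(cross (z - x) (v j - v k))) := by
    simp [cross]; ring
  rw [this, sign_mul, sign_pos h0, one_mul, Left.sign_neg]

theorem local_words {d : ℕ} (v : Fin d → ℂ) {lam : ℝ} (h0 : 0 < lam) (n : ℕ) : ∀ x : ℂ,
    ∃ U ∈ nhds x, ∀ z ∈ U, ∀ z' ∈ U, ∀ ω ω', Adm v lam ω z n → Adm v lam ω' z' n →
      SS v x z = SS v x z' → ∀ i < n, ω i = ω' i := by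
  induction n with
  | zero => exact fun x => ⟨univ, univ_mem, by intros; omega⟩
  | succ n ih =>
    intro x
    choose U hU hUw using ih
    have hA : ∀ᶠ z in nhds x, ∀ k, stepMap v lam k z ∈ U (stepMap v lam k x) := by
      rw [eventually_all]
      intro k
      exact (continuous_stepMap v lam k).continuousAt.eventually (hU _)
    have hB : ∀ᶠ z in nhds x, ∀ k j, hh v k j x ≠ 0 →
        (0 < hh v k j z ↔ 0 < hh v k j x) := by
      rw [eventually_all]
      intro k
      rw [eventually_all]
      intro j
      rcases lt_trichotomy (hh v k j x) 0 with h | h | h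
      · filter_upwards [(continuous_hh v k j).continuousAt.eventually_lt_const h] with z hz _
        exact ⟨fun h' => by linarith, fun h' => by linarith⟩
      · exact Eventually.of_forall fun z hz => absurd h hz
      · filter_upwards [(continuous_hh v k j).continuousAt.eventually_const_lt h] with z hz _
        exact ⟨fun _ => h, fun _ => hz⟩
    refine ⟨_, hA.and hB, ?_⟩
    rintro z ⟨hz1, hz2⟩ z' ⟨hz1', hz2'⟩ ω ω' ha ha' hS
    have hsign : ∀ k j, (0 < hh v k j z ↔ 0 < hh v k j z') := by
      intro k j
      by_cases hx : hh v k j x = 0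
      · have e1 := hh_sub v k j z x
        have e2 := hh_sub v k j z' x
        have e3 := congrFun (congrFun hS k) j
        unfold SS at e3
        have f1 : hh v k j z = -(cross (z - x) (v j - v k)) := by
          rw [hx] at e1; simp only [sub_zero] at e1; rw [e1]; simp [cross]; ring
        have f2 : hh v k j z' = -(cross (z' - x) (v j - v k)) := by
          rw [hx] at e2; simp only [sub_zero] at e2; rw [e2]; simp [cross]; ring
        rw [f1, f2, neg_pos, neg_pos, ← sign_eq_neg_one_iff, ← sign_eq_neg_one_iff, e3]
      · rw [hz2 k j hx, hz2' k j hx]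
    have h0' : ω 0 = ω' 0 := by
      have c1 : z ∈ cone v (ω 0) := ha 0 (by omega)
      have c2 : z' ∈ cone v (ω' 0) := ha' 0 (by omega)
      refine cone_unique (z := z') ?_ c2
      rw [mem_cone_iff] at c1 ⊢
      exact fun j hj => (hsign _ _).1 (c1 j hj)
    have b1 : Adm v lam (fun i => ω (1 + i)) (stepMap v lam (ω 0) z) n :=
      Adm.shift (m := 1) (by rw [add_comm]; exact ha)
    have b2 : Adm v lam (fun i => ω' (1 + i)) (stepMap v lam (ω 0) z') n := by
      rw [h0']
      exact Adm.shift (m := 1) (by rw [add_comm]; exact ha')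
    have := hUw (stepMap v lam (ω 0) x) _ (hz1 _) _ (hz1' _) _ _ b1 b2
      (by rw [SS_step v h0, SS_step v h0, hS])
    intro i hi
    rcases Nat.eq_zero_or_pos i with rfl | hpos
    · exact h0'
    · have := this (i - 1) (by omega)
      simp only [show 1 + (i - 1) = i by omega] at this
      exact this

theorem WW_step {d : ℕ} [NeZero d] (v : Fin d → ℂ) {lam R : ℝ} (h0 : 0 < lam) (h1 : lam < 1)
    (hR : ∀ i, ‖v i‖ * (1 + lam) < (1 - lam) * R) (n : ℕ) :
    ∃ m0, ∀ m ≥ m0, (WW v lam R (m + n)).ncard ≤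
      (WW v lam R m).ncard * Fintype.card (Fin d → Fin d → SignType) := by
  choose U hU hUw using local_words v h0 n
  have hK : IsCompact (closedBall (0 : ℂ) (2 * R)) := isCompact_closedBall _ _
  obtain ⟨δ, hδ, hleb⟩ := lebesgue_number_lemma_of_metric hK (c := fun x => interior (U x))
    (fun x => isOpen_interior) (fun x _ => mem_iUnion.2 ⟨x, mem_interior_iff_mem_nhds.2 (hU x)⟩)
  have hlim : Tendsto (fun m : ℕ => lam ^ m * (4 * R)) atTop (nhds 0) := by
    simpa using (tendsto_pow_atTop_nhds_zero_of_lt_one h0.le h1).mul_const (4 * R)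
  obtain ⟨m0, hm0⟩ := eventually_atTop.1 (hlim.eventually_lt_const hδ)
  refine ⟨m0, fun m hm => ?_⟩
  have hy : ∀ u : Fin m → Fin d, ∃ y, ∀ ω z, z ∈ bsq R → Adm v lam ω z m → (∀ i : Fin m, ω i = u i) →
      path v lam ω z m ∈ U y := by
    intro u
    by_cases hu : u ∈ WW v lam R m
    · obtain ⟨ω, z, hz, ha, hw⟩ := hu
      have hx : path v lam ω z m ∈ closedBall (0 : ℂ) (2 * R) := by
        rw [mem_closedBall_zero_iff]
        exact bsq_norm (path_sq h0 hR ω hz m)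
      obtain ⟨y, hy⟩ := hleb _ hx
      refine ⟨y, fun ω' z' hz' ha' hw' => interior_subset (hy ?_)⟩
      rw [mem_ball, dist_eq_norm, path_congr v lam z' (ω' := ω)
        (fun i hi => by rw [hw' ⟨i, hi⟩, hw ⟨i, hi⟩]), path_sub, norm_mul, norm_pow, norm_neg,
        Complex.norm_real, Real.norm_eq_abs, abs_of_pos h0]
      refine lt_of_le_of_lt ?_ (hm0 m hm)
      gcongr
      have := norm_sub_le z' z
      have := bsq_norm hz
      have := bsq_norm hz'
      linarith
    · exact ⟨0, fun ω z hz ha hw => absurd ⟨ω, z, hz, ha, hw⟩ hu⟩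
  choose y hy using hy
  have hrep : ∀ u ∈ WW v lam R (m + n), ∃ ω z, z ∈ bsq R ∧ Adm v lam ω z (m + n) ∧
      ∀ i : Fin (m + n), ω i = u i := fun u hu => hu
  choose! ω z hz ha hw using hrep
  let res : (Fin (m + n) → Fin d) → (Fin m → Fin d) := fun u i => u (Fin.castAdd n i)
  let code : (Fin (m + n) → Fin d) → (Fin m → Fin d) × (Fin d → Fin d → SignType) :=
    fun u => (res u, SS v (y (res u)) (path v lam (ω u) (z u) m))
  have hres : ∀ u ∈ WW v lam R (m + n), ∀ i : Fin m, ω u i = res u i :=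
    fun u hu i => hw u hu (Fin.castAdd n i)
  have hcard : ((WW v lam R m) ×ˢ (univ : Set (Fin d → Fin d → SignType))).ncard =
      (WW v lam R m).ncard * Fintype.card (Fin d → Fin d → SignType) := by
    rw [Set.ncard_prod, Set.ncard_univ, Nat.card_eq_fintype_card]
  rw [← hcard]
  refine Set.ncard_le_ncard_of_injOn code ?_ ?_ (Set.toFinite _)
  · intro u hu
    exact ⟨⟨ω u, z u, hz u hu, (ha u hu).mono (by omega), hres u hu⟩, mem_univ _⟩
  · intro u hu u' hu' hc
    have hc1 : res u = res u' := congrArg Prod.fst hc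
    have hc2 : SS v (y (res u)) (path v lam (ω u) (z u) m) =
        SS v (y (res u)) (path v lam (ω u') (z u') m) := by
      have := congrArg Prod.snd hc
      simp only [code] at this
      rw [this, hc1]
    have hin := hy (res u) _ _ (hz u hu) ((ha u hu).mono (by omega)) (hres u hu)
    have hin' := hy (res u) _ _ (hz u' hu') ((ha u' hu').mono (by omega))
      (by rw [hc1]; exact hres u' hu')
    have hl := hUw _ _ hin _ hin' _ _ (ha u hu).shift (ha u' hu').shift hc2
    funext i
    rw [← hw u hu i, ← hw u' hu' i]
    by_cases hi : (i : ℕ) < m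
    · have a1 := hres u hu ⟨i, hi⟩
      have a2 := hres u' hu' ⟨i, hi⟩
      rw [← hc1] at a2
      exact a1.trans a2.symm
    · have := hl (i - m) (by have := i.2; omega)
      simp only [show m + ((i : ℕ) - m) = i by omega] at this
      exact this

theorem WW_subexp {d : ℕ} [NeZero d] (v : Fin d → ℂ) {lam R : ℝ} (h0 : 0 < lam) (h1 : lam < 1)
    (hR : ∀ i, ‖v i‖ * (1 + lam) < (1 - lam) * R) {θ : ℝ} (hθ : 1 < θ) :
    ∃ N, 1 ≤ N ∧ ((WW v lam R N).ncard : ℝ) ≤ θ ^ N := by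
  set S := Fintype.card (Fin d → Fin d → SignType)
  obtain ⟨n, hn⟩ := pow_unbounded_of_one_lt (2 * (S : ℝ)) hθ
  obtain ⟨m, hm⟩ := WW_step v h0 h1 hR n
  have hind : ∀ j : ℕ, ((WW v lam R (m + j * n)).ncard : ℝ) ≤ (WW v lam R m).ncard * (S : ℝ) ^ j := by
    intro j
    induction j with
    | zero =>
      have e : m + 0 * n = m := by simp
      rw [e]; simp
    | succ j ih =>
      have h := hm (m + j * n) (by omega)
      rw [show m + j * n + n = m + (j + 1) * n by ring] at h
      have h' : ((WW v lam R (m + (j + 1) * n)).ncard : ℝ) ≤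
        (WW v lam R (m + j * n)).ncard * S := by exact_mod_cast h
      rw [pow_succ, ← mul_assoc]
      exact h'.trans (by gcongr)
  obtain ⟨j, hj⟩ := pow_unbounded_of_one_lt ((WW v lam R m).ncard : ℝ) (one_lt_two : (1:ℝ) < 2)
  refine ⟨m + (j + 1) * (n + 0) + 0, ?_, ?_⟩
  · have : n ≠ 0 := by
      rintro rfl
      have : 1 ≤ S := Fintype.card_pos
      have : (1 : ℝ) ≤ S := by exact_mod_cast this
      simp at hn
      linarith
    have : 1 ≤ n := Nat.one_le_iff_ne_zero.2 this
    nlinarith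
  · simp only [add_zero]
    refine (hind (j + 1)).trans ?_
    calc ((WW v lam R m).ncard : ℝ) * (S : ℝ) ^ (j + 1)
        ≤ 2 ^ (j + 1) * (S : ℝ) ^ (j + 1) := by
          gcongr
          refine hj.le.trans ?_
          gcongr
          · norm_num
          · omega
      _ = (2 * (S : ℝ)) ^ (j + 1) := by rw [mul_pow]
      _ ≤ (θ ^ n) ^ (j + 1) := by gcongr
      _ = θ ^ ((j + 1) * n) := by rw [← pow_mul, mul_comm]
      _ ≤ θ ^ (m + (j + 1) * n) := by
          gcongr
          · exact hθ.le
          · omega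

/-! ### Fourier–Motzkin elimination and semicontinuity of the set of words -/

/-- Polynomial functions. -/
def PolyFun (f : ℝ → ℝ) : Prop := ∃ p : Polynomial ℝ, ∀ x, f x = p.eval x

theorem PolyFun.const (c : ℝ) : PolyFun fun _ => c := ⟨Polynomial.C c, fun x => by simp⟩
theorem PolyFun.id : PolyFun fun x => x := ⟨Polynomial.X, fun x => by simp⟩
theorem PolyFun.add {f g : ℝ → ℝ} (hf : PolyFun f) (hg : PolyFun g) : PolyFun fun x => f x + g x := by
  obtain ⟨p, hp⟩ := hf
  obtain ⟨q, hq⟩ := hg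
  exact ⟨p + q, fun x => by simp [hp, hq]⟩
theorem PolyFun.mul {f g : ℝ → ℝ} (hf : PolyFun f) (hg : PolyFun g) : PolyFun fun x => f x * g x := by
  obtain ⟨p, hp⟩ := hf
  obtain ⟨q, hq⟩ := hg
  exact ⟨p * q, fun x => by simp [hp, hq]⟩
theorem PolyFun.sub {f g : ℝ → ℝ} (hf : PolyFun f) (hg : PolyFun g) : PolyFun fun x => f x - g x := by
  obtain ⟨p, hp⟩ := hf
  obtain ⟨q, hq⟩ := hg
  exact ⟨p - q, fun x => by simp [hp, hq]⟩
theorem PolyFun.pow (n : ℕ) : PolyFun fun x => x ^ n := ⟨Polynomial.X ^ n, fun x => by simp⟩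

theorem fm_one {ι : Type} [Fintype ι] (α c : ι → ℝ) :
    (∃ a, ∀ i, α i * a < c i) ↔
      (∀ i, α i = 0 → 0 < c i) ∧ ∀ i j, 0 < α i → α j < 0 → α j * c i < α i * c j := by
  classical
  constructor
  · rintro ⟨a, ha⟩
    refine ⟨fun i hi => by simpa [hi] using ha i, fun i j hi hj => ?_⟩
    have h1 := ha i
    have h2 := ha j
    nlinarith
  · rintro ⟨h1, h2⟩
    obtain ⟨a, ha1, ha2⟩ := Order.exists_between_finsets
      ((Finset.univ.filter fun j => α j < 0).image fun j => c j / α j)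
      ((Finset.univ.filter fun i => 0 < α i).image fun i => c i / α i) (by
        simp only [Finset.mem_image, Finset.mem_filter, Finset.mem_univ, true_and]
        rintro _ ⟨j, hj, rfl⟩ _ ⟨i, hi, rfl⟩
        rw [div_lt_iff_of_neg hj, mul_comm, ← mul_div_assoc, div_lt_iff₀ hi]
        have := h2 i j hi hj
        linarith)
    refine ⟨a, fun i => ?_⟩
    rcases lt_trichotomy (α i) 0 with h | h | h
    · have := ha1 (c i / α i) (Finset.mem_image_of_mem _ (by simpa using h))
      rw [div_lt_iff_of_neg h] at this
      linarith
    · rw [h, zero_mul]; exact h1 i h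
    · have := ha2 (c i / α i) (Finset.mem_image_of_mem _ (by simpa using h))
      rw [lt_div_iff₀ h] at this
      linarith

theorem fm_poly_one {κ : Type} [Fintype κ] (β : κ → ℝ) (q : κ → ℝ → ℝ) (hq : ∀ i, PolyFun (q i)) :
    ∃ (κ' : Type) (_ : Fintype κ') (g : κ' → ℝ → ℝ), (∀ r, PolyFun (g r)) ∧
      ∀ x, (∃ b, ∀ r, β r * b < q r x) ↔ ∀ r, 0 < g r x := by
  classical
  refine ⟨κ ⊕ κ × κ, inferInstance, fun r => match r with
    | Sum.inl i => if β i = 0 then q i else fun _ => 1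
    | Sum.inr (i, j) => if 0 < β i ∧ β j < 0 then fun x => β i * q j x - β j * q i x
        else fun _ => 1, ?_, ?_⟩
  · rintro (i | ⟨i, j⟩)
    · dsimp only
      split_ifs
      · exact hq i
      · exact PolyFun.const 1
    · dsimp only
      split_ifs
      · exact ((PolyFun.const _).mul (hq j)).sub ((PolyFun.const _).mul (hq i))
      · exact PolyFun.const 1
  · intro x
    rw [fm_one]
    constructor
    · rintro ⟨h1, h2⟩ (i | ⟨i, j⟩)
      · dsimp only
        split_ifs with h
        · exact h1 i h
        · norm_num
      · dsimp only
        split_ifs with h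
        · have := h2 i j h.1 h.2
          linarith
        · norm_num
    · intro h
      refine ⟨fun i hi => ?_, fun i j hi hj => ?_⟩
      · have := h (Sum.inl i)
        simpa [hi] using this
      · have := h (Sum.inr (i, j))
        simpa [hi, hj] using this

theorem fm_poly_two {ι : Type} [Fintype ι] (α β : ι → ℝ) (q : ι → ℝ → ℝ) (hq : ∀ i, PolyFun (q i)) :
    ∃ (κ' : Type) (_ : Fintype κ') (g : κ' → ℝ → ℝ), (∀ r, PolyFun (g r)) ∧
      ∀ x, (∃ a b, ∀ i, α i * a + β i * b < q i x) ↔ ∀ r, 0 < g r x := by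
  classical
  let β' : ι ⊕ ι × ι → ℝ := fun r => match r with
    | Sum.inl i => if α i = 0 then β i else 0
    | Sum.inr (i, j) => if 0 < α i ∧ α j < 0 then α i * β j - α j * β i else 0
  let q' : ι ⊕ ι × ι → ℝ → ℝ := fun r => match r with
    | Sum.inl i => if α i = 0 then q i else fun _ => 1
    | Sum.inr (i, j) => if 0 < α i ∧ α j < 0 then fun x => α i * q j x - α j * q i x
        else fun _ => 1
  obtain ⟨κ', hκ', g, hg, hiff⟩ := fm_poly_one β' q' (by
    rintro (i | ⟨i, j⟩)
    · dsimp only [q']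
      split_ifs
      · exact hq i
      · exact PolyFun.const 1
    · dsimp only [q']
      split_ifs
      · exact ((PolyFun.const _).mul (hq j)).sub ((PolyFun.const _).mul (hq i))
      · exact PolyFun.const 1)
  refine ⟨κ', hκ', g, hg, fun x => ?_⟩
  rw [← hiff, exists_comm]
  refine exists_congr fun b => ?_
  have : (∃ a, ∀ i, α i * a + β i * b < q i x) ↔ ∃ a, ∀ i, α i * a < q i x - β i * b :=
    exists_congr fun a => forall_congr' fun i => by rw [lt_sub_iff_add_lt]
  rw [this, fm_one]
  constructor
  · rintro ⟨h1, h2⟩ (i | ⟨i, j⟩)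
    · dsimp only [β', q']
      split_ifs with h
      · linarith [h1 i h]
      · norm_num
    · dsimp only [β', q']
      split_ifs with h
      · have := h2 i j h.1 h.2
        linarith
      · norm_num
  · intro h
    refine ⟨fun i hi => ?_, fun i j hi hj => ?_⟩
    · have := h (Sum.inl i)
      simp only [β', q', hi, if_true] at this
      linarith
    · have := h (Sum.inr (i, j))
      simp only [β', q', hi, hj, and_self, if_true] at this
      linarith

theorem exc_of_poly {κ : Type} [Fintype κ] (g : κ → ℝ → ℝ) (hg : ∀ r, PolyFun (g r)) :
    ∃ C : Set ℝ, C.Countable ∧ ∀ x ∉ C, (¬ ∀ r, 0 < g r x) → ∀ᶠ y in nhds x, ¬ ∀ r, 0 < g r y := by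
  classical
  choose p hp using hg
  refine ⟨⋃ r, ((p r).roots.toFinset : Set ℝ), countable_iUnion fun r => Finset.countable_toSet _,
    fun x hx hn => ?_⟩
  push Not at hn
  obtain ⟨r, hr⟩ := hn
  by_cases h0 : p r = 0
  · refine Eventually.of_forall fun y hy => ?_
    have := hy r
    rw [hp r, h0] at this
    simp at this
  · have hne : g r x ≠ 0 := by
      intro h
      refine hx (mem_iUnion.2 ⟨r, ?_⟩)
      simp [h0, ← hp r, h]
    have hlt : g r x < 0 := lt_of_le_of_ne hr hne
    have hc : Continuous (g r) := by
      rw [show g r = fun x => (p r).eval x from funext (hp r)]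
      exact (p r).continuous
    filter_upwards [hc.continuousAt.eventually_lt_const hlt] with y hy hall
    linarith [hall r]

theorem path_isPoly {d : ℕ} (v : Fin d → ℂ) (ω : ℕ → Fin d) (n : ℕ) :
    PolyFun (fun lam => (path v lam ω 0 n).re) ∧ PolyFun (fun lam => (path v lam ω 0 n).im) := by
  induction n with
  | zero => exact ⟨PolyFun.const 0, PolyFun.const 0⟩
  | succ n ih =>
    have e1 : (fun lam => (path v lam ω 0 (n + 1)).re) = fun lam =>
        (0 - lam) * (path v lam ω 0 n).re + (1 + lam) * (v (ω n)).re := by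
      funext lam
      simp [path, stepMap]
    have e2 : (fun lam => (path v lam ω 0 (n + 1)).im) = fun lam =>
        (0 - lam) * (path v lam ω 0 n).im + (1 + lam) * (v (ω n)).im := by
      funext lam
      simp [path, stepMap]
    rw [e1, e2]
    exact ⟨(((PolyFun.const 0).sub PolyFun.id).mul ih.1).add
        (((PolyFun.const 1).add PolyFun.id).mul (PolyFun.const _)),
      (((PolyFun.const 0).sub PolyFun.id).mul ih.2).add
        (((PolyFun.const 1).add PolyFun.id).mul (PolyFun.const _))⟩

theorem hh_path_isPoly {d : ℕ} (v : Fin d → ℂ) (ω : ℕ → Fin d) (n : ℕ) (k j : Fin d) :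
    PolyFun (fun lam => hh v k j (path v lam ω 0 n)) := by
  obtain ⟨h1, h2⟩ := path_isPoly v ω n
  exact ((((PolyFun.const _).sub h1).mul ((PolyFun.const _).sub h2)).sub
    (((PolyFun.const _).sub h2).mul ((PolyFun.const _).sub h1)))

theorem hh_path_scaled {d : ℕ} (v : Fin d → ℂ) (lam : ℝ) (ω : ℕ → Fin d) (z : ℂ)
    (k j : Fin d) {i n : ℕ} (hi : i ≤ n) :
    lam ^ (n - i) * hh v k j (path v lam ω z i) = lam ^ (n - i) * hh v k j (path v lam ω 0 i)
      - ((-1) ^ i * (v j - v k).im * (lam ^ n * z.re) +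
        -((-1) ^ i * (v j - v k).re) * (lam ^ n * z.im)) := by
  have h1 := hh_sub v k j (path v lam ω z i) (path v lam ω 0 i)
  rw [← neg_sub (path v lam ω z i), path_sub, sub_zero] at h1
  have e1 : (-(lam : ℂ)) ^ i = (((-lam) ^ i : ℝ) : ℂ) := by push_cast; rfl
  rw [e1] at h1
  have h2 : cross (-((((-lam) ^ i : ℝ) : ℂ) * z)) (v j - v k) =
      -((-lam) ^ i) * (z.re * (v j - v k).im - z.im * (v j - v k).re) := by
    generalize (-lam) ^ i = c
    simp [cross]; ring
  rw [h2] at h1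
  have e2 : lam ^ n = lam ^ (n - i) * lam ^ i := by rw [← pow_add]; congr 1; omega
  have e3 : (-lam) ^ i = (-1) ^ i * lam ^ i := by rw [← mul_pow]; congr 1; ring
  rw [e3] at h1
  rw [e2]
  have : hh v k j (path v lam ω z i) = hh v k j (path v lam ω 0 i) +
    -((-1) ^ i * lam ^ i) * (z.re * (v j - v k).im - z.im * (v j - v k).re) := by linarith
  rw [this]
  ring

theorem exc_word {d : ℕ} [NeZero d] (v : Fin d → ℂ) (R : ℝ) (n : ℕ) (u : Fin n → Fin d) :
    ∃ C : Set ℝ, C.Countable ∧ ∀ x ∉ C, 0 < x → u ∉ WW v x R n →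
      ∀ᶠ y in nhds x, u ∉ WW v y R n := by
  classical
  let ω : ℕ → Fin d := fun i => if h : i < n then u ⟨i, h⟩ else 0
  have hω : ∀ i : Fin n, ω i = u i := fun i => by simp [ω]
  let α : (Fin n × Fin d) ⊕ Fin 4 → ℝ := fun r => match r with
    | Sum.inl (i, j) => if j = u i then 0 else (-1) ^ (i : ℕ) * (v j - v (u i)).im
    | Sum.inr s => ![1, -1, 0, 0] s
  let β : (Fin n × Fin d) ⊕ Fin 4 → ℝ := fun r => match r with
    | Sum.inl (i, j) => if j = u i then 0 else -((-1) ^ (i : ℕ) * (v j - v (u i)).re)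
    | Sum.inr s => ![0, 0, 1, -1] s
  let q : (Fin n × Fin d) ⊕ Fin 4 → ℝ → ℝ := fun r => match r with
    | Sum.inl (i, j) => if j = u i then fun _ => 1 else
        fun x => x ^ (n - i) * hh v (u i) j (path v x ω 0 i)
    | Sum.inr s => fun x => R * x ^ n
  obtain ⟨κ, _, g, hg, hiff⟩ := fm_poly_two α β q (by
    rintro (⟨i, j⟩ | s)
    · dsimp only [q]
      split_ifs
      · exact PolyFun.const 1
      · exact (PolyFun.pow _).mul (hh_path_isPoly v ω i _ _)
    · exact (PolyFun.const R).mul (PolyFun.pow n))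
  have key : ∀ x, 0 < x → (u ∈ WW v x R n ↔ ∀ r, 0 < g r x) := by
    intro x hx
    have hxn : 0 < x ^ n := by positivity
    rw [← hiff]
    have hA : ∀ z : ℂ, (z ∈ bsq R ∧ Adm v x ω z n) ↔
        ∀ r, α r * (x ^ n * z.re) + β r * (x ^ n * z.im) < q r x := by
      intro z
      constructor
      · rintro ⟨⟨hz1, hz2⟩, ha⟩ (⟨i, j⟩ | s)
        · dsimp only [α, β, q]
          by_cases hj : j = u i
          · simp [hj]
          · simp only [hj, if_false]
            have h1 := ha i i.2
            rw [hω i, mem_cone_iff] at h1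
            have h2 := h1 j hj
            have h3 := hh_path_scaled v x ω z (u i) j (i := i) (n := n) i.2.le
            have : 0 < x ^ (n - i) * hh v (u i) j (path v x ω z i) := by positivity
            linarith
        · rw [abs_lt] at hz1 hz2
          fin_cases s <;> simp [α, β, q] <;> nlinarith
      · intro h
        refine ⟨⟨abs_lt.2 ⟨?_, ?_⟩, abs_lt.2 ⟨?_, ?_⟩⟩, ?_⟩
        · have := h (Sum.inr 1)
          simp [α, β, q] at this
          nlinarith
        · have := h (Sum.inr 0)
          simp [α, β, q] at this
          nlinarith
        · have := h (Sum.inr 3)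
          simp [α, β, q] at this
          nlinarith
        · have := h (Sum.inr 2)
          simp [α, β, q] at this
          nlinarith
        · intro i hi
          have hωi := hω ⟨i, hi⟩
          simp only at hωi
          rw [hωi, mem_cone_iff]
          intro j hj
          have h1 := h (Sum.inl (⟨i, hi⟩, j))
          simp only [α, β, q, hj, if_false] at h1
          have h3 := hh_path_scaled v x ω z (u ⟨i, hi⟩) j (i := i) (n := n) hi.le
          have h4 : 0 < x ^ (n - i) * hh v (u ⟨i, hi⟩) j (path v x ω z i) := by linarith
          exact pos_of_mul_pos_right h4 (by positivity)
    constructor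
    · rintro ⟨ω', z, hz, ha, hw⟩
      exact ⟨_, _, (hA z).1 ⟨hz, ha.congr fun i hi => by
        have := hw ⟨i, hi⟩
        have h2 := hω ⟨i, hi⟩
        simp only at this h2
        rw [this, h2]⟩⟩
    · rintro ⟨a, b, hab⟩
      have := (hA ⟨a / x ^ n, b / x ^ n⟩).2 (by
        simp only [mul_div_cancel₀ _ hxn.ne']
        exact hab)
      exact ⟨ω, _, this.1, this.2, hω⟩
  obtain ⟨C, hC, hC'⟩ := exc_of_poly g hg
  refine ⟨C, hC, fun x hx hx0 hu => ?_⟩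
  rw [key x hx0] at hu
  filter_upwards [hC' x hx hu, lt_mem_nhds hx0] with y hy hy0
  rwa [key y hy0]

theorem exc_all {d : ℕ} [NeZero d] (v : Fin d → ℂ) (R : ℝ) :
    ∃ C : Set ℝ, C.Countable ∧ ∀ x ∉ C, 0 < x → ∀ n, ∀ᶠ y in nhds x, WW v y R n ⊆ WW v x R n := by
  choose C hC hC' using fun n => exc_word (d := d) v R n
  refine ⟨⋃ n, ⋃ u, C n u, countable_iUnion fun n => countable_iUnion fun u => hC n u,
    fun x hx hx0 n => ?_⟩
  have : ∀ᶠ y in nhds x, ∀ u, u ∉ WW v x R n → u ∉ WW v y R n := by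
    rw [eventually_all]
    intro u
    by_cases hu : u ∈ WW v x R n
    · exact Eventually.of_forall fun y h => absurd hu h
    · have hx' : x ∉ C n u := fun h => hx (mem_iUnion.2 ⟨n, mem_iUnion.2 ⟨u, h⟩⟩)
      filter_upwards [hC' n u x hx' hx0 hu] with y hy _
      exact hy
  filter_upwards [this] with y hy u hu
  by_contra h
  exact hy u h hu

/-! ### Power series attached to words -/

/-- The power series attached to a (reversed) word. -/
def fser {A : Type} (H : A → ℝ) (η : ℕ → A) (x : ℝ) : ℝ := ∑' s, H (η s) * (-x) ^ s

theorem fser_summable {A : Type} {H : A → ℝ} {K : ℝ} (hK : ∀ a, |H a| ≤ K) (η : ℕ → A) {x : ℝ}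
    (hx : |x| < 1) : Summable fun s => H (η s) * (-x) ^ s := by
  refine Summable.of_norm_bounded (g := fun s => K * |x| ^ s)
    ((summable_geometric_of_lt_one (abs_nonneg _) hx).mul_left K) fun s => ?_
  rw [norm_mul, norm_pow, norm_neg, Real.norm_eq_abs, Real.norm_eq_abs]
  exact mul_le_mul_of_nonneg_right (hK _) (by positivity)

theorem fser_diff {A : Type} {H : A → ℝ} {K : ℝ} (hK : ∀ a, |H a| ≤ K) (η η' : ℕ → A) {x b : ℝ}
    (hx0 : 0 ≤ x) (hxb : x ≤ b) (hb : b < 1) (n : ℕ) (h : ∀ s < n, η s = η' s) :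
    |fser H η x - fser H η' x| ≤ 2 * K / (1 - b) * b ^ n := by
  have hx1 : |x| < 1 := by rw [abs_of_nonneg hx0]; linarith
  have hs := fser_summable hK η hx1
  have hs' := fser_summable hK η' hx1
  have hK0 : 0 ≤ K := (abs_nonneg _).trans (hK (η 0))
  unfold fser
  rw [← hs.tsum_sub hs', ← (hs.sub hs').sum_add_tsum_nat_add n]
  rw [Finset.sum_eq_zero fun s hs => by rw [h s (Finset.mem_range.1 hs), sub_self], zero_add]
  have hg : HasSum (fun s => 2 * K * b ^ n * b ^ s) (2 * K * b ^ n * (1 - b)⁻¹) :=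
    (hasSum_geometric_of_lt_one (hx0.trans hxb) hb).mul_left _
  rw [← Real.norm_eq_abs]
  refine (tsum_of_norm_bounded hg fun s => ?_).trans_eq (by rw [div_eq_mul_inv]; ring)
  rw [← sub_mul, norm_mul, norm_pow, norm_neg, Real.norm_eq_abs, Real.norm_eq_abs,
    abs_of_nonneg hx0]
  have h1 : |H (η (s + n)) - H (η' (s + n))| ≤ 2 * K := by
    have := abs_sub (H (η (s + n))) (H (η' (s + n)))
    linarith [hK (η (s + n)), hK (η' (s + n))]
  have h2 : x ^ (s + n) ≤ b ^ n * b ^ s := by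
    rw [← pow_add, add_comm n]
    exact pow_le_pow_left₀ hx0 hxb _
  calc _ ≤ 2 * K * (b ^ n * b ^ s) := by gcongr
    _ = _ := by ring

theorem fser_hasFPower {A : Type} {H : A → ℝ} {K : ℝ} (hK : ∀ a, |H a| ≤ K) (η : ℕ → A) :
    HasFPowerSeriesOnBall (fser H η)
      (FormalMultilinearSeries.ofScalars ℝ fun s => H (η s) * (-1) ^ s) 0 1 := by
  set p := FormalMultilinearSeries.ofScalars (𝕜 := ℝ) ℝ fun s => H (η s) * (-1 : ℝ) ^ s with hp
  have hr : 1 ≤ p.radius := by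
    have := p.le_radius_of_bound (r := 1) K fun n => by
      rw [hp, FormalMultilinearSeries.ofScalars_norm]
      simp only [norm_mul, norm_pow, norm_neg, norm_one, one_pow, mul_one, NNReal.coe_one]
      exact hK _
    simpa using this
  refine ⟨hr, one_pos, fun {y} hy => ?_⟩
  have hy1 : |y| < 1 := by
    simpa [Metric.mem_eball, edist_dist, Real.dist_eq] using hy
  have := (fser_summable hK η hy1).hasSum
  rw [zero_add]
  have e : (fun s => p s fun _ => y) = fun s => H (η s) * (-y) ^ s := by
    funext s
    rw [hp, FormalMultilinearSeries.ofScalars_apply_eq, neg_pow y s]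
    simp; ring
  rw [e]
  exact this

theorem fser_order {A : Type} {H : A → ℝ} {K : ℝ} (hK : ∀ a, |H a| ≤ K) (η : ℕ → A) {x : ℝ}
    (hx : |x| < 1) (hz : fser H η x = 0) (hne : ∃ s, H (η s) ≠ 0) :
    ∃ q m : ℕ, 1 ≤ q ∧ 1 ≤ m ∧ ∀ y, |y - x| < 1 / m → |y - x| ^ q ≤ m * |fser H η y| := by
  have hp := fser_hasFPower hK η
  have han : AnalyticOnNhd ℝ (fser H η) (ball 0 1) := by
    have := hp.analyticOnNhd
    have e : Metric.eball (0 : ℝ) 1 = ball 0 1 := by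
      have := Metric.eball_ofReal (x := (0:ℝ)) (ε := 1)
      simpa using this
    rwa [e] at this
  have hxb : x ∈ ball (0 : ℝ) 1 := by simpa using hx
  have hax := han x hxb
  have hnz : ¬ ∀ᶠ y in nhds x, fser H η y = 0 := by
    intro h
    have h0 := han.eqOn_of_preconnected_of_eventuallyEq (g := fun _ => 0)
      (fun y _ => analyticAt_const) (convex_ball 0 1).isPreconnected hxb h
    have h1 : fser H η =ᶠ[nhds 0] 0 := by
      filter_upwards [ball_mem_nhds (0:ℝ) one_pos] with y hy using h0 hy
    have h2 := (hp.hasFPowerSeriesAt.congr h1).eq_zero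
    obtain ⟨s, hs⟩ := hne
    have h3 := congrFun h2 s
    have h3 := (FormalMultilinearSeries.ofScalars_eq_zero ℝ s).1 h3
    simp at h3
    exact hs h3
  obtain ⟨q, g, hg, hgx, hfg⟩ := hax.exists_eventuallyEq_pow_smul_nonzero_iff.2 hnz
  have hgpos : |g x| / 2 < |g x| := by have := abs_pos.2 hgx; linarith
  have hev : ∀ᶠ y in nhds x, |g x| / 2 < |g y| :=
    hg.continuousAt.abs.eventually_const_lt hgpos
  obtain ⟨ε, hε, hball⟩ := Metric.eventually_nhds_iff.1 (hev.and hfg)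
  obtain ⟨m, hm⟩ := exists_nat_gt (max 1 (max (1 / ε) (2 / |g x|)))
  have hm1 : (1:ℝ) < m := (le_max_left _ _).trans_lt hm
  have hm2 : 1 / ε < m := (le_max_left _ _).trans_lt ((le_max_right _ _).trans_lt hm)
  have hm3 : 2 / |g x| < m := (le_max_right _ _).trans_lt ((le_max_right _ _).trans_lt hm)
  refine ⟨q, m, ?_, by exact_mod_cast hm1.le, fun y hy => ?_⟩
  · rcases Nat.eq_zero_or_pos q with rfl | h
    · have := hfg.self_of_nhds
      simp [hz] at this
      exact absurd this.symm hgx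
    · exact h
  · have hyε : dist y x < ε := by
      rw [Real.dist_eq]
      refine hy.trans ?_
      rw [div_lt_iff₀ (by linarith)]
      rw [div_lt_iff₀ hε] at hm2
      linarith
    obtain ⟨h1, h2⟩ := hball hyε
    rw [h2, smul_eq_mul, abs_mul, abs_pow]
    rw [div_lt_iff₀ (abs_pos.2 hgx)] at hm3
    have : 1 ≤ m * |g y| := by nlinarith
    have h0 : 0 ≤ |y - x| ^ q := by positivity
    nlinarith

/-- block of a reversed word, read forward -/
def blk {A : Type} (N : ℕ) (η : ℕ → A) (t : ℕ) : Fin N → A := fun i => η (t + i.rev)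

theorem null_core {A : Type} [Finite A] {H : A → ℝ} {K : ℝ} (hK : ∀ a, |H a| ≤ K) (Z : Set ℝ)
    (q m N : ℕ) (hq : 1 ≤ q) (hm : 1 ≤ m) (hN : 1 ≤ N) (β θ : ℝ) (hβ : 0 < β) (hθ : 0 < θ)
    (hβ1 : β < 1) (hθβ : θ * β < 1) (S : Set (Fin N → A)) (hS : (S.ncard : ℝ) ≤ θ ^ N)
    (hZ : ∀ x ∈ Z, 0 ≤ x ∧ x ≤ β ^ q) (hd : ∀ x ∈ Z, ∀ y ∈ Z, |x - y| < 1 / m)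
    (hη : ∀ x ∈ Z, ∃ η : ℕ → A, fser H η x = 0 ∧
      (∀ y, |y - x| < 1 / m → |y - x| ^ q ≤ m * |fser H η y|) ∧ ∀ t, blk N η (t * N) ∈ S) :
    volume Z = 0 := by
  classical
  rcases Z.eq_empty_or_nonempty with rfl | ⟨x0, hx0⟩
  · simp
  have : Finite S := Subtype.finite
  have := Fintype.ofFinite S
  have : Nonempty (ℕ → A) := ⟨(hη x0 hx0).choose⟩
  choose! η h1 h2 h3 using hη
  have hK0 : 0 ≤ K := (abs_nonneg _).trans (hK (η x0 0))
  set b := β ^ q with hb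
  have hb1 : b < 1 := pow_lt_one₀ hβ.le hβ1 (by omega)
  set C := max 1 (m * (2 * K / (1 - b))) with hC
  have hC1 : 1 ≤ C := le_max_left _ _
  have hdist : ∀ l x y, x ∈ Z → y ∈ Z → (∀ t < l, blk N (η x) (t * N) = blk N (η y) (t * N)) →
      |x - y| ≤ C * β ^ (l * N) := by
    intro l x y hx hy hxy
    have hag : ∀ s < l * N, η x s = η y s := by
      intro s hs
      have ht : s / N < l := Nat.div_lt_of_lt_mul (by rwa [mul_comm] at hs)
      have hr : s % N < N := Nat.mod_lt _ (by omega)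
      have := congrFun (hxy (s / N) ht) (Fin.rev ⟨s % N, hr⟩)
      simp only [blk, Fin.rev_rev] at this
      rwa [Nat.div_add_mod'] at this
    have e1 := fser_diff hK (η x) (η y) (hZ x hx).1 (hZ x hx).2 hb1 (l * N) hag
    rw [h1 x hx, zero_sub, abs_neg] at e1
    have e2 := h2 y hy x (hd x hx y hy)
    have hm0 : (0:ℝ) ≤ m := by positivity
    have e3 : |x - y| ^ q ≤ (C * β ^ (l * N)) ^ q := by
      calc _ ≤ _ := e2
        _ ≤ m * (2 * K / (1 - b) * b ^ (l * N)) := by gcongr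
        _ = (m * (2 * K / (1 - b))) * b ^ (l * N) := by ring
        _ ≤ C * b ^ (l * N) := by
          gcongr
          exact le_max_right _ _
        _ ≤ C ^ q * b ^ (l * N) := by
          gcongr
          exact le_self_pow₀ hC1 (by omega)
        _ = _ := by rw [mul_pow, hb, ← pow_mul, ← pow_mul, mul_comm q]
    exact (pow_le_pow_iff_left₀ (abs_nonneg _) (by positivity) (by omega)).1 e3
  have hvol : ∀ l : ℕ, volume Z ≤ ENNReal.ofReal (C * ((θ * β) ^ N) ^ l) := by
    intro l
    let Zt : (Fin l → S) → Set ℝ := fun t => {x | x ∈ Z ∧ ∀ i : Fin l, blk N (η x) (i * N) = t i}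
    have hcov : Z ⊆ ⋃ t, Zt t := fun x hx =>
      mem_iUnion.2 ⟨fun i => ⟨_, h3 x hx i⟩, hx, fun i => rfl⟩
    have hZt : ∀ t, volume (Zt t) ≤ ENNReal.ofReal (C * β ^ (l * N)) := by
      intro t
      refine (Real.volume_le_diam _).trans (Metric.ediam_le fun x hx y hy => ?_)
      rw [edist_dist, Real.dist_eq]
      refine ENNReal.ofReal_le_ofReal (hdist l x y hx.1 hy.1 fun i hi => ?_)
      have e1 := hx.2 ⟨i, hi⟩
      have e2 := hy.2 ⟨i, hi⟩
      simp only at e1 e2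
      rw [e1, e2]
    calc volume Z ≤ volume (⋃ t, Zt t) := measure_mono hcov
      _ ≤ ∑ t, volume (Zt t) := measure_iUnion_fintype_le _ _
      _ ≤ ∑ _t : Fin l → S, ENNReal.ofReal (C * β ^ (l * N)) := Finset.sum_le_sum fun t _ => hZt t
      _ = ENNReal.ofReal (((S.ncard : ℝ)) ^ l * (C * β ^ (l * N))) := by
        rw [Finset.sum_const, Finset.card_univ, nsmul_eq_mul, Fintype.card_fun, Fintype.card_fin,
          ENNReal.ofReal_mul (p := (S.ncard : ℝ) ^ l) (by positivity), ← Nat.cast_pow, ENNReal.ofReal_natCast,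
          Set.ncard_eq_toFinset_card', Set.toFinset_card]
      _ ≤ _ := by
        refine ENNReal.ofReal_le_ofReal ?_
        calc _ ≤ (θ ^ N) ^ l * (C * β ^ (l * N)) := by gcongr
          _ = _ := by rw [mul_pow, mul_pow, ← pow_mul, ← pow_mul, mul_comm l]; ring
  have hlim : Tendsto (fun l : ℕ => ENNReal.ofReal (C * ((θ * β) ^ N) ^ l)) atTop (nhds 0) := by
    have h := (tendsto_pow_atTop_nhds_zero_of_lt_one (r := (θ * β) ^ N) (by positivity)
      (pow_lt_one₀ (by positivity) hθβ (by omega))).const_mul C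
    simpa using ENNReal.tendsto_ofReal h
  exact le_antisymm (ge_of_tendsto' hlim hvol) bot_le

/-- Parameters at which some limiting word produces a zero. -/
def Bset {d : ℕ} (v : Fin d → ℂ) (R : ℝ) (k j : Fin d) : Set ℝ :=
  {x | 0 < x ∧ x < 1 ∧ (∀ i, ‖v i‖ * (1 + x) < (1 - x) * R) ∧ ∃ η : ℕ → Fin d,
    (∀ t N, blk N η t ∈ WW v x R N) ∧ fser (fun i => hh v k j (v i)) η x = 0 ∧
    ∃ s, hh v k j (v (η s)) ≠ 0}

theorem Bset_null {d : ℕ} [NeZero d] (v : Fin d → ℂ) (R : ℝ) (k j : Fin d) :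
    volume (Bset v R k j) = 0 := by
  obtain ⟨C, hC, hC'⟩ := exc_all v R
  set H : Fin d → ℝ := fun i => hh v k j (v i) with hH
  obtain ⟨K, hK⟩ : ∃ K, ∀ a, |H a| ≤ K :=
    ⟨∑ a, |H a|, fun a => Finset.single_le_sum (f := fun a => |H a|) (fun i _ => abs_nonneg _)
      (Finset.mem_univ a)⟩
  let Z : ℕ → ℕ → Set ℝ := fun q m => {x | 1 ≤ q ∧ 1 ≤ m ∧ x ∉ C ∧ 0 < x ∧ x < 1 ∧
    (∀ i, ‖v i‖ * (1 + x) < (1 - x) * R) ∧ ∃ η : ℕ → Fin d,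
    (∀ t N, blk N η t ∈ WW v x R N) ∧ fser H η x = 0 ∧
    ∀ y, |y - x| < 1 / m → |y - x| ^ q ≤ m * |fser H η y|}
  have hsub : Bset v R k j ⊆ C ∪ ⋃ q, ⋃ m, Z q m := by
    rintro x ⟨hx0, hx1, hR, η, hw, hf, hs⟩
    by_cases hxC : x ∈ C
    · exact Or.inl hxC
    · right
      obtain ⟨q, m, hq, hm, h⟩ := fser_order hK η (by rwa [abs_of_pos hx0]) hf hs
      exact mem_iUnion.2 ⟨q, mem_iUnion.2 ⟨m, hq, hm, hxC, hx0, hx1, hR, η, hw, hf, h⟩⟩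
  refine measure_mono_null hsub (measure_union_null (hC.measure_zero _)
    (measure_iUnion_null fun q => measure_iUnion_null fun m => ?_))
  refine measure_null_of_locally_null _ fun x hx => ?_
  obtain ⟨hq, hm, hxC, hx0, hx1, hR, -⟩ := hx
  -- choose `β` with `x < β ^ q`, `β < 1`
  have hβex : ∃ β : ℝ, 0 < β ∧ β < 1 ∧ x < β ^ q := by
    have hc : Tendsto (fun β : ℝ => β ^ q) (nhdsWithin 1 (Iio 1)) (nhds 1) := by
      have : ContinuousAt (fun β : ℝ => β ^ q) 1 := by fun_prop
      have h2 := this.tendsto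
      rw [one_pow] at h2
      exact h2.mono_left nhdsWithin_le_nhds
    have e1 := hc.eventually (lt_mem_nhds hx1)
    have e2 : ∀ᶠ β in nhdsWithin (1:ℝ) (Iio 1), 0 < β :=
      nhdsWithin_le_nhds (lt_mem_nhds one_pos)
    obtain ⟨β, h1, h2, h3⟩ := (e1.and (e2.and self_mem_nhdsWithin)).exists
    exact ⟨β, h2, h3, h1⟩
  obtain ⟨β, hβ0, hβ1, hxβ⟩ := hβex
  obtain ⟨θ, hθ1, hθ2⟩ := exists_between (one_lt_one_div hβ0 hβ1)
  obtain ⟨N, hN, hcard⟩ := WW_subexp v hx0 hx1 hR hθ1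
  have hU := hC' x hxC hx0 N
  have hm0 : (0:ℝ) < m := by exact_mod_cast hm
  have hU2 : ∀ᶠ y in nhds x, |y - x| < 1 / (2 * m) := by
    refine Metric.eventually_nhds_iff.2 ⟨1 / (2 * m), by positivity, fun y hy => ?_⟩
    rwa [Real.dist_eq] at hy
  have hU3 := hU.and (hU2.and (gt_mem_nhds hxβ))
  refine ⟨{y | y ∈ Z q m ∧ (WW v y R N ⊆ WW v x R N ∧ |y - x| < 1 / (2 * m) ∧ y < β ^ q)},
    inter_mem self_mem_nhdsWithin (nhdsWithin_le_nhds hU3), ?_⟩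
  refine null_core hK _ q m N hq hm hN β θ hβ0 (by linarith) hβ1 ((lt_div_iff₀ hβ0).1 hθ2)
    (WW v x R N) hcard ?_ ?_ ?_
  · rintro y ⟨hy, -, -, h⟩
    exact ⟨hy.2.2.2.1.le, h.le⟩
  · rintro y ⟨-, -, h, -⟩ y' ⟨-, -, h', -⟩
    rw [abs_lt] at *
    have : (1:ℝ) / m = 1 / (2 * m) + 1 / (2 * m) := by field_simp; norm_num
    rw [this]
    constructor <;> linarith
  · rintro y ⟨⟨-, -, -, -, -, -, η, hw, hf, h⟩, hsubW, -⟩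
    exact ⟨η, hf, h, fun t => hsubW (hw _ _)⟩

/-! ### Convex polygons have no collinear triples -/

theorem convex_ne {d : ℕ} [NeZero d] (hd : 3 ≤ d) {v : Fin d → ℂ} (hv : IsConvexPolygon v)
    {i j : Fin d} (hij : i ≠ j) : v i ≠ v j := by
  intro h
  have h1 : j = i + 1 := by
    by_contra hne
    have := hv i j hij.symm hne
    rw [h] at this
    simp [cross] at this
  have h2 : i = j + 1 := by
    by_contra hne
    have := hv j i hij hne
    rw [h] at this
    simp [cross] at this
  have h3 : i = i + (1 + 1) := by
    rw [← add_assoc, ← h1]; exact h2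
  have h4 : (1 + 1 : Fin d) = 0 := by
    have := h3.symm
    rwa [add_eq_left] at this
  have h5 := congrArg Fin.val h4
  rw [Fin.val_add, Fin.val_one', Fin.val_zero, Nat.mod_eq_of_lt (by omega : 1 < d),
    Nat.mod_eq_of_lt (by omega)] at h5
  omega

theorem convex_btw {d : ℕ} [NeZero d] {v : Fin d → ℂ} (hv : IsConvexPolygon v)
    {m a b : Fin d} (hma : m ≠ a) (hmb : m ≠ b) (hab : a ≠ b) {r s : ℝ} (hr : 0 < r) (hs : 0 < s)
    (h : (s : ℂ) * (v b - v m) = -((r : ℂ) * (v a - v m))) : False := by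
  have hnn : ∀ n, 0 ≤ cross (v (m + 1) - v m) (v n - v m) := by
    intro n
    by_cases h1 : n = m
    · simp [h1, cross]
    by_cases h2 : n = m + 1
    · rw [h2, cross]; linarith
    exact (hv m n h1 h2).le
  have hre := congrArg Complex.re h
  have him := congrArg Complex.im h
  simp only [Complex.mul_re, Complex.mul_im, Complex.neg_re, Complex.neg_im, Complex.ofReal_re,
    Complex.ofReal_im, zero_mul, sub_zero, add_zero] at hre him
  have e : s * cross (v (m + 1) - v m) (v b - v m) = - (r * cross (v (m + 1) - v m) (v a - v m)) := by
    unfold cross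
    linear_combination (v (m + 1) - v m).re * him - (v (m + 1) - v m).im * hre
  have ha := hnn a
  have hb := hnn b
  have ha0 : cross (v (m + 1) - v m) (v a - v m) = 0 := by
    by_contra hne
    have : 0 < cross (v (m + 1) - v m) (v a - v m) := lt_of_le_of_ne ha (Ne.symm hne)
    have : 0 < r * cross (v (m + 1) - v m) (v a - v m) := by positivity
    have : 0 ≤ s * cross (v (m + 1) - v m) (v b - v m) := by positivity
    linarith
  have hb0 : cross (v (m + 1) - v m) (v b - v m) = 0 := by
    rw [ha0, mul_zero, neg_zero] at e
    exact (mul_eq_zero.1 e).resolve_left hs.ne'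
  have h1 : a = m + 1 := by
    by_contra hne
    exact absurd ha0 (hv m a hma.symm hne).ne'
  have h2 : b = m + 1 := by
    by_contra hne
    exact absurd hb0 (hv m b hmb.symm hne).ne'
  exact hab (h1.trans h2.symm)

theorem cross_zero_smul {p q : ℂ} (hp : p ≠ 0) (h : cross p q = 0) : ∃ t : ℝ, q = t * p := by
  unfold cross at h
  by_cases hr : p.re = 0
  · have hi : p.im ≠ 0 := fun hi => hp (Complex.ext hr hi)
    refine ⟨q.im / p.im, Complex.ext ?_ ?_⟩
    · simp [hr] at h ⊢
      exact h.resolve_left hi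
    · simp; field_simp
  · refine ⟨q.re / p.re, Complex.ext ?_ ?_⟩
    · simp; field_simp
    · simp; field_simp; linarith

theorem convex_NC {d : ℕ} [NeZero d] (hd : 3 ≤ d) {v : Fin d → ℂ} (hv : IsConvexPolygon v) :
    NC v := by
  intro i j k hij hik hjk h0
  have hp : v j - v i ≠ 0 := sub_ne_zero.2 (convex_ne hd hv hij.symm)
  obtain ⟨t, ht⟩ := cross_zero_smul hp h0
  rcases lt_trichotomy t 0 with h | h | h
  · refine convex_btw hv hij hik hjk (r := -t) (s := 1) (by linarith) one_pos ?_
    rw [ht]; push_cast; ring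
  · rw [h] at ht
    simp at ht
    exact convex_ne hd hv hik.symm (sub_eq_zero.1 ht)
  · have hk : v k = v i + t * (v j - v i) := by rw [← ht]; ring
    rcases lt_trichotomy t 1 with h1 | h1 | h1
    · refine convex_btw hv hik.symm hjk.symm hij (r := 1 - t) (s := t) (by linarith) h ?_
      rw [hk]; push_cast; ring
    · rw [h1] at hk
      apply convex_ne hd hv hjk.symm
      rw [hk]; push_cast; ring
    · refine convex_btw hv hij.symm hjk hik (r := t - 1) (s := 1) (by linarith) one_pos ?_
      rw [hk]; push_cast; ring

/-! ### Words are not eventually alternating -/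

theorem hh_bsq {d : ℕ} {v : Fin d → ℂ} {x R : ℝ} (h0 : 0 < x)
    (hR : ∀ i, ‖v i‖ * (1 + x) < (1 - x) * R) (k j : Fin d) {z : ℂ} (hz : z ∈ bsq R) :
    |hh v k j z| ≤ 18 * R ^ 2 := by
  have hR0 : 0 < R := (abs_nonneg _).trans_lt hz.1
  have hv : ∀ i, ‖v i‖ ≤ R := fun i => by nlinarith [hR i, norm_nonneg (v i)]
  have h1 : ∀ i, ‖v i - z‖ ≤ 3 * R := fun i => by
    have := norm_sub_le (v i) z
    linarith [hv i, bsq_norm hz]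
  have h2 := cross_bound (v k - z) (v j - z)
  have h3 : ‖v k - z‖ * ‖v j - z‖ ≤ (3 * R) * (3 * R) :=
    mul_le_mul (h1 k) (h1 j) (norm_nonneg _) (by positivity)
  unfold hh
  nlinarith

theorem alt_contra {d : ℕ} {v : Fin d → ℂ} {x R : ℝ} (h0 : 0 < x)
    (hR : ∀ i, ‖v i‖ * (1 + x) < (1 - x) * R) {a b i0 : Fin d} (hai : i0 ≠ a)
    {ω : ℕ → Fin d} {z : ℂ} {t : ℕ} (ht : 1 ≤ t) (hz : z ∈ bsq R) (ha : Adm v x ω z (2 * t + 1))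
    (he : ∀ m ≤ t, ω (2 * m) = a) (ho : ∀ m < t, ω (2 * m + 1) = b)
    (hD : hh v a i0 (v b) < 0) (hlt : x ^ (2 * t) * (18 * R ^ 2) + hh v a i0 (v b) < 0) : False := by
  have hrec : ∀ m < t, hh v a i0 (path v x ω z (2 * (m + 1))) =
      x ^ 2 * hh v a i0 (path v x ω z (2 * m)) + (1 + x) * hh v a i0 (v b) := by
    intro m hm
    show hh v a i0 (stepMap v x (ω (2 * m + 1)) (stepMap v x (ω (2 * m)) (path v x ω z (2 * m)))) = _
    rw [hh_step, hh_step, he m hm.le, ho m hm, hh_self_left]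
    ring
  have hb : ∀ m, m + 1 ≤ t → hh v a i0 (path v x ω z (2 * (m + 1))) ≤
      x ^ (2 * (m + 1)) * (18 * R ^ 2) + hh v a i0 (v b) := by
    intro m
    induction m with
    | zero =>
      intro h
      have h1 := hrec 0 h
      have h2 := (abs_le.1 (hh_bsq h0 hR a i0 hz)).2
      have h3 : hh v a i0 (path v x ω z (2 * 0)) = hh v a i0 z := rfl
      rw [h1, h3]
      have : x ^ 2 * hh v a i0 z ≤ x ^ 2 * (18 * R ^ 2) := by gcongr
      simp only [zero_add, mul_one]
      nlinarith
    | succ m ih =>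
      intro h
      rw [hrec (m + 1) h]
      have h1 := ih (by omega)
      have h2 : x ^ 2 * hh v a i0 (path v x ω z (2 * (m + 1))) ≤
        x ^ 2 * (x ^ (2 * (m + 1)) * (18 * R ^ 2) + hh v a i0 (v b)) := by gcongr
      have h3 : x ^ (2 * (m + 1 + 1)) = x ^ 2 * x ^ (2 * (m + 1)) := by
        rw [← pow_add]; congr 1; ring
      rw [h3]
      nlinarith [sq_nonneg x]
  obtain ⟨t, rfl⟩ : ∃ t', t = t' + 1 := ⟨t - 1, by omega⟩
  have h1 := hb t le_rfl
  have h2 := ha (2 * (t + 1)) (by omega)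
  rw [he _ le_rfl, mem_cone_iff] at h2
  have := h2 i0 hai
  linarith

theorem adm_ne {d : ℕ} {v : Fin d → ℂ} {x : ℝ} (h0 : 0 < x) {ω : ℕ → Fin d} {z : ℂ} {n : ℕ}
    {b : Fin d} {i : ℕ} (ha : Adm v x ω z n) (hi : i + 1 < n) (hb : b ≠ ω i) : ω (i + 1) ≠ ω i := by
  intro h
  have h1 := (mem_cone_iff _ _ _).1 (ha i (by omega)) b hb
  have h2 := (mem_cone_iff _ _ _).1 (ha (i + 1) hi) b (by rwa [h])
  rw [h] at h2
  have h3 : path v x ω z (i + 1) = stepMap v x (ω i) (path v x ω z i) := rfl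
  rw [h3, hh_step, hh_self_left] at h2
  nlinarith

theorem exists_third {d : ℕ} (hd : 3 ≤ d) (k j : Fin d) : ∃ i : Fin d, i ≠ k ∧ i ≠ j := by
  have : ({k, j} : Finset (Fin d)).card < (Finset.univ : Finset (Fin d)).card := by
    rw [Finset.card_univ, Fintype.card_fin]
    exact Finset.card_le_two.trans_lt (by omega)
  obtain ⟨i, -, hi⟩ := Finset.exists_mem_notMem_of_card_lt_card this
  simp at hi
  exact ⟨i, hi.1, hi.2⟩

theorem exists_ne_word {d : ℕ} [NeZero d] (hd : 3 ≤ d) {v : Fin d → ℂ} (hv : NC v) {x R : ℝ}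
    (h0 : 0 < x) (h1 : x < 1) (hR : ∀ i, ‖v i‖ * (1 + x) < (1 - x) * R) {k j : Fin d} (hkj : k ≠ j)
    {η : ℕ → Fin d} (hw : ∀ t N, blk N η t ∈ WW v x R N) : ∃ s, η s ≠ k ∧ η s ≠ j := by
  by_contra hcon
  push Not at hcon
  have hcon' : ∀ s, η s = k ∨ η s = j := fun s => by
    by_cases h : η s = k
    · exact Or.inl h
    · exact Or.inr (hcon s h)
  obtain ⟨i0, hik, hij⟩ := exists_third hd k j
  set D := hh v k i0 (v j) with hDdef
  have hD0 : D ≠ 0 := hv j k i0 hkj.symm hij.symm hik.symm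
  have hlim : Tendsto (fun t : ℕ => x ^ (2 * t) * (18 * R ^ 2)) atTop (nhds 0) := by
    have := ((tendsto_pow_atTop_nhds_zero_of_lt_one (r := x ^ 2) (by positivity)
      (pow_lt_one₀ h0.le h1 (by norm_num))).mul_const (18 * R ^ 2))
    simpa [← pow_mul] using this
  obtain ⟨t, ht1, ht2⟩ := ((eventually_ge_atTop 1).and
    (hlim.eventually (gt_mem_nhds (abs_pos.2 hD0)))).exists
  obtain ⟨ω, z, hz, ha, hω⟩ := hw 0 (2 * t + 2)
  have hmem : ∀ i < 2 * t + 2, ω i = k ∨ ω i = j := by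
    intro i hi
    have := hω ⟨i, hi⟩
    simp only at this
    rw [this]
    exact hcon' _
  have hne : ∀ i, i + 1 < 2 * t + 2 → ω (i + 1) ≠ ω i := by
    intro i hi
    refine adm_ne h0 (b := i0) ha hi ?_
    rcases hmem i (by omega) with h | h <;> rw [h]
    · exact hik
    · exact hij
  -- the word alternates between two letters
  have hper : ∀ i, i + 2 < 2 * t + 2 → ω (i + 2) = ω i := by
    intro i hi
    have e1 := hne i (by omega)
    have e2 := hne (i + 1) (by omega)
    rcases hmem i (by omega) with h | h <;> rcases hmem (i + 1) (by omega) with h' | h' <;>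
      rcases hmem (i + 2) (by omega) with h'' | h'' <;> simp_all
  have hev : ∀ m ≤ t, ω (2 * m) = ω 0 ∧ ω (2 * m + 1) = ω 1 := by
    intro m
    induction m with
    | zero => intro _; exact ⟨rfl, rfl⟩
    | succ m ih =>
      intro h
      obtain ⟨e1, e2⟩ := ih (by omega)
      rw [← e1, ← e2]
      exact ⟨hper (2 * m) (by omega), hper (2 * m + 1) (by omega)⟩
  set a := ω 0 with hadef
  set b := ω 1 with hbdef
  have hab : b ≠ a := hne 0 (by omega)
  have hDab : hh v b i0 (v a) = - hh v a i0 (v b) := by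
    simp only [hh, cross, Complex.sub_re, Complex.sub_im]; ring
  have hDabs : |hh v a i0 (v b)| = |D| := by
    rcases hmem 0 (by omega) with h | h <;> rcases hmem 1 (by omega) with h' | h'
    · exact absurd (h'.trans h.symm) hab
    · rw [hadef, hbdef, h, h']
    · rw [hadef, hbdef, h, h'] at hDab
      rw [hadef, hbdef, h, h', hDdef, hDab, abs_neg]
    · exact absurd (h'.trans h.symm) hab
  have hia : i0 ≠ a := by rcases hmem 0 (by omega) with h | h <;> rw [hadef, h] <;> assumption
  have hib : i0 ≠ b := by rcases hmem 1 (by omega) with h | h <;> rw [hbdef, h] <;> assumption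
  have hDab0 : hh v a i0 (v b) ≠ 0 := by rw [← abs_pos, hDabs]; exact abs_pos.2 hD0
  rw [← hDabs] at ht2
  rcases lt_or_gt_of_ne hDab0 with hneg | hpos
  · rw [abs_of_neg hneg] at ht2
    exact alt_contra h0 hR hia ht1 hz (ha.mono (by omega)) (fun m hm => (hev m hm).1)
      (fun m hm => (hev m hm.le).2) hneg (by linarith)
  · rw [abs_of_pos hpos] at ht2
    have ha' : Adm v x ω z (1 + (2 * t + 1)) := by rwa [show 1 + (2 * t + 1) = 2 * t + 2 by ring]
    refine alt_contra h0 hR (a := b) (b := a) hib ht1 (path_sq h0 hR ω hz 1) ha'.shift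
      (fun m hm => ?_) (fun m hm => ?_) (by linarith) (by linarith)
    · rw [add_comm]; exact (hev m hm).2
    · show ω (1 + (2 * m + 1)) = a
      rw [show 1 + (2 * m + 1) = 2 * (m + 1) by ring]
      exact (hev (m + 1) hm).1

/-! ### Limits of bad words -/

theorem fser_tail {A : Type} {H : A → ℝ} {K : ℝ} (hK : ∀ a, |H a| ≤ K) (η : ℕ → A) {x : ℝ}
    (hx0 : 0 ≤ x) (hx : x < 1) (n : ℕ) :
    |fser H η x - ∑ s ∈ Finset.range n, H (η s) * (-x) ^ s| ≤ K / (1 - x) * x ^ n := by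
  have hx1 : |x| < 1 := by rwa [abs_of_nonneg hx0]
  have hs := fser_summable hK η hx1
  unfold fser
  rw [← hs.sum_add_tsum_nat_add n, add_sub_cancel_left]
  have hg : HasSum (fun s => K * x ^ n * x ^ s) (K * x ^ n * (1 - x)⁻¹) :=
    (hasSum_geometric_of_lt_one hx0 hx).mul_left _
  rw [← Real.norm_eq_abs]
  refine (tsum_of_norm_bounded hg fun s => ?_).trans_eq (by rw [div_eq_mul_inv]; ring)
  rw [norm_mul, norm_pow, norm_neg, Real.norm_eq_abs, Real.norm_eq_abs, abs_of_nonneg hx0]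
  calc _ ≤ K * x ^ (s + n) := by gcongr; exact hK _
    _ = _ := by rw [pow_add]; ring

/-- The condition at level `n` for a bad parameter. -/
def BadAt {d : ℕ} (R : ℝ) (n : ℕ) (v : Fin d → ℂ) (x : ℝ) : Prop :=
  ∃ ω : ℕ → Fin d, ∃ z : ℂ, ∃ k j : Fin d, z ∈ bsq R ∧ k ≠ j ∧ Adm v x ω z n ∧
    |hh v k j (path v x ω z n)| < 2 * x ^ n

theorem bad_mem_Bset {d : ℕ} [NeZero d] (hd : 3 ≤ d) {v : Fin d → ℂ} (hv : NC v) {x R : ℝ}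
    (h0 : 0 < x) (h1 : x < 1) (hR : ∀ i, ‖v i‖ * (1 + x) < (1 - x) * R)
    (hbad : ∀ n, BadAt R n v x) : ∃ k j, x ∈ Bset v R k j := by
  choose ω z k j hz hkj ha hlt using hbad
  let ρ : ℕ → ℕ → Fin d := fun n s => ω n (n - 1 - s)
  obtain ⟨⟨η, k0, j0⟩, φ, hφ, hlim⟩ :=
    CompactSpace.tendsto_subseq (fun n => ((ρ n, k n, j n) : (ℕ → Fin d) × Fin d × Fin d))
  have hl1 := (continuous_fst.tendsto _).comp hlim
  have hl2 := (continuous_snd.tendsto _).comp hlim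
  have hl3 := (continuous_fst.tendsto _).comp hl2
  have hl4 := (continuous_snd.tendsto _).comp hl2
  simp only [nhds_discrete, tendsto_pure, Function.comp_apply] at hl3 hl4
  have hl5 : ∀ s, ∀ᶠ n in atTop, ρ (φ n) s = η s := by
    intro s
    have := (tendsto_pi_nhds.1 hl1) s
    simpa only [nhds_discrete, tendsto_pure, Function.comp_apply] using this
  have hkey : ∀ M, ∃ n, M ≤ n ∧ k n = k0 ∧ j n = j0 ∧ ∀ s < M, ω n (n - 1 - s) = η s := by
    intro M
    have e : ∀ᶠ n in atTop, ∀ s ∈ Finset.range M, ρ (φ n) s = η s :=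
      (Finset.range M).eventually_all.2 fun s _ => hl5 s
    obtain ⟨n, e1, e2, e3, e4⟩ := (e.and (hl3.and (hl4.and (eventually_ge_atTop M)))).exists
    exact ⟨φ n, e4.trans hφ.le_apply, e2, e3, fun s hs => e1 s (Finset.mem_range.2 hs)⟩
  have hkj0 : k0 ≠ j0 := by
    obtain ⟨n, -, e1, e2, -⟩ := hkey 0
    rw [← e1, ← e2]; exact hkj n
  have hw : ∀ t N, blk N η t ∈ WW v x R N := by
    intro t N
    obtain ⟨n, hn, -, -, hag⟩ := hkey (t + N)
    have ha' : Adm v x (ω n) (z n) ((n - t - N) + N) := (ha n).mono (by omega)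
    refine ⟨_, _, path_sq h0 hR (ω n) (hz n) (n - t - N), ha'.shift, fun i => ?_⟩
    have := hag (t + i.rev) (by omega)
    simp only [blk]
    rw [← this]
    congr 1
    rw [Fin.val_rev]
    omega
  obtain ⟨s, hs1, hs2⟩ := exists_ne_word hd hv h0 h1 hR hkj0 hw
  refine ⟨k0, j0, h0, h1, hR, η, hw, ?_, s, hv _ _ _ hs1 hs2 hkj0⟩
  set H : Fin d → ℝ := fun i => hh v k0 j0 (v i) with hH
  obtain ⟨K, hK⟩ : ∃ K, ∀ a, |H a| ≤ K :=
    ⟨∑ a, |H a|, fun a => Finset.single_le_sum (f := fun a => |H a|) (fun i _ => abs_nonneg _)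
      (Finset.mem_univ a)⟩
  set C := 2 * K / (1 - x) + K / (1 - x) + (2 + 18 * R ^ 2) with hC
  have hK0 : 0 ≤ K := (abs_nonneg _).trans (hK (η 0))
  have h1x : 0 < 1 - x := by linarith
  have hbound : ∀ M, |fser H η x| ≤ C * x ^ M := by
    intro M
    obtain ⟨n, hn, e1, e2, hag⟩ := hkey M
    set ρn : ℕ → Fin d := fun s => ω n (n - 1 - s) with hρ
    have b1 := fser_diff hK η ρn h0.le le_rfl h1 M fun s hs => (hag s hs).symm
    have b2 := fser_tail hK ρn h0.le h1 n
    have b3 : |∑ s ∈ Finset.range n, H (ρn s) * (-x) ^ s| ≤ (2 + 18 * R ^ 2) * x ^ n := by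
      have p1 := hh_path v x (ω n) (z n) k0 j0 n
      have p2 := hlt n
      rw [e1, e2, p1] at p2
      have p3 := hh_bsq h0 hR k0 j0 (hz n)
      have p4 : |(-x) ^ n * hh v k0 j0 (z n)| ≤ x ^ n * (18 * R ^ 2) := by
        rw [abs_mul, abs_pow, abs_neg, abs_of_pos h0]
        gcongr
      have p5 : ∑ s ∈ Finset.range n, (-x) ^ s * hh v k0 j0 (v (ω n (n - 1 - s))) =
          ∑ s ∈ Finset.range n, H (ρn s) * (-x) ^ s :=
        Finset.sum_congr rfl fun s _ => mul_comm _ _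
      rw [p5] at p2
      set S := ∑ s ∈ Finset.range n, H (ρn s) * (-x) ^ s
      have p6 : |(1 + x) * S| ≤ (2 + 18 * R ^ 2) * x ^ n := by
        rw [abs_lt] at p2
        rw [abs_le] at p4 ⊢
        constructor <;> nlinarith
      rw [abs_mul, abs_of_pos (by linarith)] at p6
      nlinarith [abs_nonneg S]
    have hxn : x ^ n ≤ x ^ M := pow_le_pow_of_le_one h0.le h1.le hn
    have b4 : K / (1 - x) * x ^ n ≤ K / (1 - x) * x ^ M := by gcongr
    have b5 : (2 + 18 * R ^ 2) * x ^ n ≤ (2 + 18 * R ^ 2) * x ^ M := by gcongr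
    rw [abs_le] at *
    rw [hC]
    constructor <;> linarith
  have hlim0 : Tendsto (fun M : ℕ => C * x ^ M) atTop (nhds 0) := by
    simpa using (tendsto_pow_atTop_nhds_zero_of_lt_one h0.le h1).const_mul C
  have := ge_of_tendsto' hlim0 hbound
  exact abs_eq_zero.1 (le_antisymm this (abs_nonneg _))

/-! ### Measurability and conclusion -/

theorem continuous_path_param {d : ℕ} (ω : ℕ → Fin d) (z : ℂ) (n : ℕ) :
    Continuous fun q : (Fin d → ℂ) × ℝ => path q.1 q.2 ω z n := by
  induction n with
  | zero => exact continuous_const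
  | succ n ih =>
    show Continuous fun q : (Fin d → ℂ) × ℝ => stepMap q.1 q.2 (ω n) (path q.1 q.2 ω z n)
    unfold stepMap
    fun_prop

theorem continuous_hh_param {d : ℕ} (ω : ℕ → Fin d) (z : ℂ) (n : ℕ) (k j : Fin d) :
    Continuous fun q : (Fin d → ℂ) × ℝ => hh q.1 k j (path q.1 q.2 ω z n) := by
  have := continuous_path_param ω z n
  unfold hh cross
  fun_prop

theorem isOpen_badAt {d : ℕ} (R : ℝ) (n : ℕ) :
    IsOpen {q : (Fin d → ℂ) × ℝ | BadAt R n q.1 q.2} := by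
  unfold BadAt
  simp only [ofPred_exists, ofPred_and]
  refine isOpen_iUnion fun ω => isOpen_iUnion fun z => isOpen_iUnion fun k => isOpen_iUnion fun j =>
    isOpen_const.inter (isOpen_const.inter (IsOpen.inter ?_ ?_))
  · unfold Adm
    simp only [ofPred_forall]
    have : {q : (Fin d → ℂ) × ℝ | ∀ i < n, path q.1 q.2 ω z i ∈ cone q.1 (ω i)} =
        ⋂ i : Fin n, ⋂ j : {j // j ≠ ω i}, {q | 0 < hh q.1 (ω i) j (path q.1 q.2 ω z i)} := by
      ext q
      simp only [mem_ofPred_eq, mem_iInter]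
      exact ⟨fun h i j => h i i.2 j j.2, fun h i hi j hj => h ⟨i, hi⟩ ⟨j, hj⟩⟩
    simp only [ofPred_forall] at this
    rw [this]
    exact isOpen_iInter_of_finite fun i => isOpen_iInter_of_finite fun j =>
      isOpen_lt continuous_const (continuous_hh_param ω z i _ _)
  · exact isOpen_lt (continuous_hh_param ω z n k j).abs (by fun_prop)

/-- The bad set at scale `R`. -/
def BadSet (d : ℕ) (R : ℝ) : Set ((Fin d → ℂ) × ℝ) :=
  {q | 0 < q.2 ∧ q.2 < 1 ∧ (∀ i, ‖q.1 i‖ * (1 + q.2) < (1 - q.2) * R) ∧ NC q.1 ∧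
    ∀ n, BadAt R n q.1 q.2}

theorem isOpen_NC (d : ℕ) : IsOpen {q : (Fin d → ℂ) × ℝ | NC q.1} := by
  unfold NC
  simp only [ofPred_forall]
  refine isOpen_iInter_of_finite fun i => isOpen_iInter_of_finite fun j =>
    isOpen_iInter_of_finite fun k => isOpen_iInter_of_finite fun _ =>
    isOpen_iInter_of_finite fun _ => isOpen_iInter_of_finite fun _ => ?_
  refine isOpen_ne_fun ?_ continuous_const
  unfold hh cross
  fun_prop

theorem measurableSet_badSet (d : ℕ) (R : ℝ) : MeasurableSet (BadSet d R) := by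
  unfold BadSet
  refine (isOpen_lt continuous_const continuous_snd).measurableSet.inter
    ((isOpen_lt continuous_snd continuous_const).measurableSet.inter
    (MeasurableSet.inter ?_ ((isOpen_NC d).measurableSet.inter ?_)))
  · change MeasurableSet {q : (Fin d → ℂ) × ℝ | ∀ i, ‖q.1 i‖ * (1 + q.2) < (1 - q.2) * R}
    simp only [ofPred_forall]
    exact MeasurableSet.iInter fun i => (isOpen_lt (by fun_prop) (by fun_prop)).measurableSet
  · change MeasurableSet {q : (Fin d → ℂ) × ℝ | ∀ n, BadAt R n q.1 q.2}
    simp only [ofPred_forall]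
    exact MeasurableSet.iInter fun n => (isOpen_badAt R n).measurableSet

theorem badSet_null (d : ℕ) [NeZero d] (hd : 3 ≤ d) (R : ℝ) : volume (BadSet d R) = 0 := by
  rw [Measure.volume_eq_prod, Measure.measure_prod_null (measurableSet_badSet d R)]
  refine Eventually.of_forall fun v => ?_
  have : Prod.mk v ⁻¹' BadSet d R ⊆ ⋃ k, ⋃ j, Bset v R k j := by
    rintro x ⟨h0, h1, hR, hv, hbad⟩
    obtain ⟨k, j, h⟩ := bad_mem_Bset hd hv h0 h1 hR hbad
    exact mem_iUnion.2 ⟨k, mem_iUnion.2 ⟨j, h⟩⟩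
  exact measure_mono_null this
    (measure_iUnion_null fun k => measure_iUnion_null fun j => Bset_null v R k j)

theorem outer_billiard_aux (d : ℕ) [NeZero d] (hd : 3 ≤ d) :
    volume {q : (Fin d → ℂ) × ℝ | IsConvexPolygon q.1 ∧ q.2 ∈ Set.Ioo (0 : ℝ) 1 ∧
      ¬ AsymptoticallyPeriodic q.1 q.2} = 0 := by
  refine measure_mono_null (t := ⋃ R : ℕ, BadSet d R) ?_
    (measure_iUnion_null fun R => badSet_null d hd R)
  rintro ⟨v, x⟩ ⟨hv, ⟨h0, h1⟩, hnot⟩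
  simp only at hv h0 h1 hnot
  have h1x : 0 < 1 - x := by linarith
  obtain ⟨R, hRR⟩ := exists_nat_gt ((∑ i, ‖v i‖) * (1 + x) / (1 - x))
  rw [div_lt_iff₀ h1x] at hRR
  have hR : ∀ i, ‖v i‖ * (1 + x) < (1 - x) * (R : ℝ) := by
    intro i
    have : ‖v i‖ ≤ ∑ i, ‖v i‖ := Finset.single_le_sum (f := fun i => ‖v i‖)
      (fun i _ => norm_nonneg _) (Finset.mem_univ i)
    nlinarith
  refine mem_iUnion.2 ⟨R, h0, h1, hR, convex_NC hd hv, fun n => ?_⟩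
  by_contra hb
  refine hnot (asymptoticallyPeriodic_of_gap h0 h1 hR n (2 * x ^ n) (by positivity) ?_)
  intro ω z hz ha k j hkj
  by_contra hlt
  exact hb ⟨ω, z, k, j, hz, hkj, ha, not_le.1 hlt⟩

/-- For almost every pair `(P, λ) ∈ 𝒫_d × (0,1)` (w.r.t. Lebesgue measure on
`ℂ^d × ℝ`), the outer billiard map of `P` with contraction `λ` is asymptotically
periodic. -/
theorem outer_billiard_asymptotically_periodic_ae (d : ℕ) [NeZero d] (hd : 3 ≤ d) :
    volume {q : (Fin d → ℂ) × ℝ | IsConvexPolygon q.1 ∧ q.2 ∈ Set.Ioo (0 : ℝ) 1 ∧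
      ¬ AsymptoticallyPeriodic q.1 q.2} = 0 := by
  exact outer_billiard_aux d hd
end
end

section
/- For every (P, λ) ∈ Δ_ε one has ω(P,λ) ⊆ Λ_ε(P,λ) ⊆ K_ε. -/
open MeasureTheory Set Filter Metric

noncomputable section

/-- The `ε`-neighbourhood `Δ_ε = B_ε(P') × (λ'-ε, λ'+ε)` of `(P', λ')`. -/
def Delta {d : ℕ} (v' : Fin d → ℂ) (l' ε : ℝ) : Set ((Fin d → ℂ) × ℝ) :=
  Metric.ball v' ε ×ˢ Set.Ioo (l' - ε) (l' + ε)

/-- `a_ε = λ' + ε`. -/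
def aEps (l' ε : ℝ) : ℝ := l' + ε

/-- `b_ε = sup {‖P‖ : P ∈ B_ε(P')}` (sup-norm of the vertex tuple). -/
def bEps {d : ℕ} (v' : Fin d → ℂ) (ε : ℝ) : ℝ :=
  sSup ((fun w : Fin d → ℂ => ‖w‖) '' Metric.ball v' ε)

/-- `r_ε = b_ε (1+a_ε)/(1-a_ε)²`. -/
def rEps {d : ℕ} (v' : Fin d → ℂ) (l' ε : ℝ) : ℝ :=
  bEps v' ε * (1 + aEps l' ε) / (1 - aEps l' ε) ^ 2

/-- `K_ε`: the closed disc of radius `r_ε` centred at the origin. -/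
def Keps {d : ℕ} (v' : Fin d → ℂ) (l' ε : ℝ) : Set ℂ :=
  Metric.closedBall (0 : ℂ) (rEps v' l' ε)

/-- `(i 0, …, i (n-1))` is an admissible itinerary of order `n` of `T_{w,lam}`, the
cones being restricted to `K_ε`: the corresponding intersection
`A_{i_0} ∩ T⁻¹(A_{i_1}) ∩ ⋯ ∩ T^{-(n-1)}(A_{i_{n-1}})` is non-empty. -/
def Admissible {d : ℕ} (v' : Fin d → ℂ) (l' ε : ℝ) (w : Fin d → ℂ) (lam : ℝ)
    {n : ℕ} (i : Fin n → Fin d) : Prop :=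
  ∃ z : ℂ, ∀ j : Fin n, (billiardMap w lam)^[(j : ℕ)] z ∈ cone w (i j) ∩ Keps v' l' ε

/-- `I_n^ε`: the itineraries of order `n` admissible for some `(P, λ) ∈ Δ_ε`. -/
def ItinSet {d : ℕ} (v' : Fin d → ℂ) (l' ε : ℝ) (n : ℕ) : Set (Fin n → Fin d) :=
  {i | ∃ q ∈ Delta v' l' ε, Admissible v' l' ε q.1 q.2 i}

/-- `H(P, λ, i) = (1+λ) ∑_{j=0}^{n-1} (-λ)^{n-j-1} v_{i_j}`. -/
def Hpt {d : ℕ} (w : Fin d → ℂ) (lam : ℝ) {n : ℕ} (i : Fin n → Fin d) : ℂ :=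
  (1 + (lam : ℂ)) * ∑ j : Fin n, (-(lam : ℂ)) ^ (n - (j : ℕ) - 1) * w (i j)

/-- The limit set `Λ_ε(P,λ) = ⋂_{m ≥ 1} closure (⋃_{n ≥ m} {H(P,λ,i) : i ∈ I_n^ε})`. -/
def LamSet {d : ℕ} (v' : Fin d → ℂ) (l' ε : ℝ) (w : Fin d → ℂ) (lam : ℝ) : Set ℂ :=
  ⋂ m : ℕ, ⋂ (_ : 1 ≤ m),
    closure {z : ℂ | ∃ n : ℕ, m ≤ n ∧ ∃ i ∈ ItinSet v' l' ε n, Hpt w lam i = z}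

/-- `ω(P,λ)`: the union of the ω-limit sets of all non-singular points. -/
def omegaUnion {d : ℕ} (w : Fin d → ℂ) (lam : ℝ) : Set ℂ :=
  ⋃ z : ℂ, ⋃ (_ : NonSingular w lam z), omegaSet (billiardMap w lam) z

theorem billiardMap_eq {d : ℕ} {v : Fin d → ℂ} {k : Fin d} {z : ℂ} (lam : ℝ)
    (hk : z ∈ cone v k) :
    billiardMap v lam z = -(lam : ℂ) * z + (1 + (lam : ℂ)) * v k := by
  have h : ∃ k : Fin d, z ∈ cone v k := ⟨k, hk⟩
  unfold billiardMap
  rw [dif_pos h, cone_unique h.choose_spec hk]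

theorem orbit_eq {d : ℕ} (v : Fin d → ℂ) (lam : ℝ) (x : ℕ → ℂ) (k : ℕ → Fin d)
    (hx : ∀ n, x (n + 1) = -(lam : ℂ) * x n + (1 + (lam : ℂ)) * v (k n)) (n : ℕ) :
    x n = (-(lam : ℂ)) ^ n * x 0 + Hpt v lam (fun j : Fin n => k j) := by
  have key : x n = (-(lam : ℂ)) ^ n * x 0 +
      (1 + (lam : ℂ)) * ∑ j ∈ Finset.range n, (-(lam : ℂ)) ^ (n - j - 1) * v (k j) := by
    induction n with
    | zero => simp
    | succ n ih =>
      rw [hx, Finset.sum_range_succ]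
      have : ∑ j ∈ Finset.range n, (-(lam : ℂ)) ^ (n + 1 - j - 1) * v (k j)
          = -(lam : ℂ) * ∑ j ∈ Finset.range n, (-(lam : ℂ)) ^ (n - j - 1) * v (k j) := by
        rw [Finset.mul_sum]
        refine Finset.sum_congr rfl fun j hj => ?_
        have hj' := Finset.mem_range.1 hj
        have e : n + 1 - j - 1 = (n - j - 1) + 1 := by omega
        rw [e, pow_succ]; ring
      have e2 : n + 1 - n - 1 = 0 := by omega
      rw [this, ih, e2]; ring
  rw [key, Hpt, Fin.sum_univ_eq_sum_range (fun j => (-(lam : ℂ)) ^ (n - j - 1) * v (k j)) n]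

theorem Hpt_norm_le {d : ℕ} (v : Fin d → ℂ) (lam : ℝ) (h0 : 0 < lam) (h1 : lam < 1) {n : ℕ}
    (i : Fin n → Fin d) : ‖Hpt v lam i‖ ≤ (1 + lam) * (‖v‖ / (1 - lam)) := by
  have hn : ‖(1 + (lam : ℂ))‖ = 1 + lam := by
    have : (1 + (lam : ℂ)) = ((1 + lam : ℝ) : ℂ) := by push_cast; rfl
    rw [this, Complex.norm_real, Real.norm_eq_abs, abs_of_pos (by linarith)]
  rw [Hpt, norm_mul, hn]
  refine mul_le_mul_of_nonneg_left ?_ (by linarith)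
  calc ‖∑ j : Fin n, (-(lam : ℂ)) ^ (n - (j : ℕ) - 1) * v (i j)‖
      ≤ ∑ j : Fin n, lam ^ (n - (j : ℕ) - 1) * ‖v‖ := by
        refine norm_sum_le_of_le _ fun j _ => ?_
        rw [norm_mul, norm_pow, norm_neg, Complex.norm_real, Real.norm_eq_abs, abs_of_pos h0]
        exact mul_le_mul_of_nonneg_left (norm_le_pi_norm v (i j)) (by positivity)
    _ = (∑ j ∈ Finset.range n, lam ^ j) * ‖v‖ := by
        rw [Fin.sum_univ_eq_sum_range (fun j => lam ^ (n - j - 1) * ‖v‖) n,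
          ← Finset.sum_range_reflect (fun j => lam ^ j), Finset.sum_mul]
        refine Finset.sum_congr rfl fun j _ => ?_
        rw [Nat.sub_right_comm]
    _ ≤ (1 - lam)⁻¹ * ‖v‖ := by
        refine mul_le_mul_of_nonneg_right ?_ (norm_nonneg _)
        rw [← tsum_geometric_of_lt_one h0.le h1]
        exact (summable_geometric_of_lt_one h0.le h1).sum_le_tsum _ (fun j _ => by positivity)
    _ = ‖v‖ / (1 - lam) := by rw [div_eq_mul_inv, mul_comm]

theorem norm_le_bEps {d : ℕ} (v' : Fin d → ℂ) (ε : ℝ) (w : Fin d → ℂ)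
    (hw : w ∈ Metric.ball v' ε) : ‖w‖ ≤ bEps v' ε := by
  refine le_csSup ⟨‖v'‖ + ε, ?_⟩ ⟨w, hw, rfl⟩
  rintro _ ⟨u, hu, rfl⟩
  have h1 : ‖u - v'‖ < ε := by simpa [dist_eq_norm] using hu
  have h2 : ‖u‖ ≤ ‖u - v'‖ + ‖v'‖ := by simpa using norm_add_le (u - v') v'
  simp only
  linarith

theorem bound_lt_rEps (d : ℕ) [NeZero d] (hd : 3 ≤ d) (vP : Fin d → ℂ) (lP ε : ℝ)
    (hconv : IsConvexPolygon vP) (hε : 0 < ε) (hlow : 0 < lP - ε) (hupp : lP + ε < 1)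
    (q : (Fin d → ℂ) × ℝ) (hq : q ∈ Delta vP lP ε) :
    (1 + q.2) * (‖q.1‖ / (1 - q.2)) < rEps vP lP ε := by
  obtain ⟨hq1, hq2, hq3⟩ := hq
  have hv : 0 < ‖vP‖ := by
    rw [norm_pos_iff]
    rintro rfl
    have := hconv ⟨0, by omega⟩ ⟨2, by omega⟩ (by simp [Fin.ext_iff])
      (by
        intro h
        have h' := congrArg Fin.val h
        simp [Fin.val_add, Fin.val_one', Nat.mod_eq_of_lt (show 1 < d by omega)] at h')
    simp [cross] at this
  have hb : 0 < bEps vP ε := lt_of_lt_of_le hv (norm_le_bEps vP ε vP (Metric.mem_ball_self hε))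
  have hqb := norm_le_bEps vP ε q.1 hq1
  unfold rEps
  have ha : aEps lP ε < 1 := hupp
  have hqa : q.2 < aEps lP ε := hq3
  have hq0 : 0 < q.2 := by linarith
  generalize aEps lP ε = a at *
  generalize bEps vP ε = b at *
  have h1a : 0 < 1 - a := by linarith
  have h1q : 0 < 1 - q.2 := by linarith
  calc (1 + q.2) * (‖q.1‖ / (1 - q.2)) ≤ (1 + a) * (b / (1 - a)) := by
        have h2a : 0 < 1 + a := by linarith
        gcongr
    _ = b * (1 + a) / (1 - a) := by ring
    _ < b * (1 + a) / (1 - a) ^ 2 := by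
        apply div_lt_div_of_pos_left
        · apply mul_pos hb; linarith
        · positivity
        · nlinarith

/-- For every `(P, λ) ∈ Δ_ε` we have `ω(P,λ) ⊆ Λ_ε(P,λ) ⊆ K_ε`. -/
theorem omega_subset_LamSet (d : ℕ) [NeZero d] (hd : 3 ≤ d) (vP : Fin d → ℂ) (lP ε : ℝ)
    (hconv : IsConvexPolygon vP) (hε : 0 < ε) (hlow : 0 < lP - ε) (hupp : lP + ε < 1)
    (hball : ∀ w : Fin d → ℂ, ‖w - vP‖ < ε → IsConvexPolygon w)
    (q : (Fin d → ℂ) × ℝ) (hq : q ∈ Delta vP lP ε) :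
    omegaUnion q.1 q.2 ⊆ LamSet vP lP ε q.1 q.2 ∧
      LamSet vP lP ε q.1 q.2 ⊆ Keps vP lP ε := by
  have hb := bound_lt_rEps d hd vP lP ε hconv hε hlow hupp q hq
  have hq' := hq
  obtain ⟨hq1, hq2, hq3⟩ := hq'
  have h0 : 0 < q.2 := by linarith
  have h1 : q.2 < 1 := by linarith
  constructor
  · intro y hy
    simp only [omegaUnion, mem_iUnion] at hy
    obtain ⟨z, hz, hy⟩ := hy
    have hz' : ∀ n, ∃ k, (billiardMap q.1 q.2)^[n] z ∈ cone q.1 k := fun n => by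
      simpa using hz n
    choose k hk using hz'
    set x : ℕ → ℂ := fun n => (billiardMap q.1 q.2)^[n] z with hxdef
    have hx : ∀ n, x (n + 1) = -(q.2 : ℂ) * x n + (1 + (q.2 : ℂ)) * q.1 (k n) := fun n => by
      rw [← billiardMap_eq q.2 (hk n)]
      simp only [hxdef, Function.iterate_succ_apply']
    have hpow : ∀ c : ℂ, Tendsto (fun n : ℕ => ‖(-(q.2 : ℂ)) ^ n * c‖) atTop (nhds 0) := by
      intro c
      have := (tendsto_pow_atTop_nhds_zero_of_lt_one h0.le h1).mul_const ‖c‖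
      simpa [abs_of_pos h0] using this
    obtain ⟨N, hN⟩ := eventually_atTop.1 ((hpow (x 0)).eventually_lt_const (sub_pos.2 hb))
    have hK : ∀ n, N ≤ n → x n ∈ Keps vP lP ε := by
      intro n hn
      rw [Keps, mem_closedBall_zero_iff, orbit_eq q.1 q.2 x k hx n]
      have := norm_add_le ((-(q.2 : ℂ)) ^ n * x 0) (Hpt q.1 q.2 (fun j : Fin n => k j))
      have h3 := Hpt_norm_le q.1 q.2 h0 h1 (fun j : Fin n => k j)
      have h4 := hN n hn
      linarith
    simp only [LamSet, mem_iInter]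
    intro m _
    rw [Metric.mem_closure_iff]
    intro δ hδ
    obtain ⟨M, hM⟩ := eventually_atTop.1 ((hpow (x N)).eventually_lt_const (half_pos hδ))
    have hy' := mem_iInter.1 hy (N + m + M)
    obtain ⟨_, ⟨n, hn, rfl⟩, hd'⟩ := Metric.mem_closure_iff.1 hy' (δ / 2) (half_pos hδ)
    have hn' : N + m + M ≤ n := hn
    obtain ⟨p, rfl⟩ := Nat.exists_eq_add_of_le (show N ≤ n by omega)
    refine ⟨Hpt q.1 q.2 (fun j : Fin p => k (N + j)), ⟨p, by omega, _, ⟨q, hq, x N, ?_⟩, rfl⟩, ?_⟩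
    · intro j
      have e : (billiardMap q.1 q.2)^[(j : ℕ)] (x N) = x (N + j) := by
        simp only [hxdef]
        rw [← Function.iterate_add_apply, add_comm]
      rw [e]
      exact ⟨hk _, hK _ (by omega)⟩
    · have ho := orbit_eq q.1 q.2 (fun j => x (N + j)) (fun j => k (N + j))
        (fun j => hx (N + j)) p
      have hp := hM p (by omega)
      have h5 : dist (x (N + p)) (Hpt q.1 q.2 (fun j : Fin p => k (N + j))) < δ / 2 := by
        simp only [add_zero] at ho
        rw [dist_eq_norm, ho, add_sub_cancel_right]
        exact hp
      have h6 : dist y (x (N + p)) < δ / 2 := hd'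
      have := dist_triangle y (x (N + p)) (Hpt q.1 q.2 (fun j : Fin p => k (N + j)))
      linarith
  · intro y hy
    simp only [LamSet, mem_iInter] at hy
    refine closure_minimal ?_ Metric.isClosed_closedBall (hy 1 le_rfl)
    rintro _ ⟨n, _, i, _, rfl⟩
    rw [mem_closedBall_zero_iff]
    exact (Hpt_norm_le q.1 q.2 h0 h1 i).trans hb.le
end
end

section
/- For every (P, λ) ∈ Δ_ε and every integer n ≥ 1, the set Λ_ε(P,λ) is contained in the union, over all itineraries i ∈ I_n^ε, of the closed discs of radius 2 r_ε a_ε^n centred at the points H(P,λ,i). -/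
open MeasureTheory Set Filter Metric

noncomputable section

theorem aux_Hpt_split {d : ℕ} (w : Fin d → ℂ) (lam : ℝ) (k n : ℕ) (i : Fin (k + n) → Fin d) :
    Hpt w lam i = (-(lam : ℂ)) ^ n * Hpt w lam (fun j : Fin k => i (Fin.castAdd n j)) +
      Hpt w lam (fun j : Fin n => i (Fin.natAdd k j)) := by
  unfold Hpt
  rw [Fin.sum_univ_add, mul_add]
  congr 1
  · rw [mul_left_comm]
    congr 1
    rw [Finset.mul_sum]
    apply Finset.sum_congr rfl
    intro j _
    rw [← mul_assoc, ← pow_add]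
    congr 2
    have := j.2
    simp only [Fin.val_castAdd]
    omega
  · congr 1
    apply Finset.sum_congr rfl
    intro j _
    congr 2
    simp only [Fin.val_natAdd]
    omega

theorem aux_Hpt_norm {d : ℕ} (w : Fin d → ℂ) (lam a b : ℝ) (h0 : 0 < lam) (hla : lam < a)
    (ha : a < 1) (hb : ‖w‖ ≤ b) (k : ℕ) (i : Fin k → Fin d) :
    ‖Hpt w lam i‖ ≤ b * (1 + a) / (1 - a) ^ 2 := by
  have hb0 : 0 ≤ b := (norm_nonneg _).trans hb
  have h1a : 0 < 1 - a := by linarith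
  have hgeo : ∑ j ∈ Finset.range k, lam ^ j ≤ (1 - a)⁻¹ := by
    have h := Summable.sum_le_tsum (Finset.range k) (fun j _ => pow_nonneg h0.le j)
      (summable_geometric_of_lt_one h0.le (hla.trans ha))
    rw [tsum_geometric_of_lt_one h0.le (hla.trans ha)] at h
    refine h.trans ?_
    gcongr
  have hsum : ‖∑ j : Fin k, (-(lam : ℂ)) ^ (k - (j : ℕ) - 1) * w (i j)‖ ≤ (1 - a)⁻¹ * b := by
    calc _ ≤ ∑ j : Fin k, lam ^ (k - 1 - (j : ℕ)) * b := by
          refine norm_sum_le_of_le _ fun j _ => ?_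
          rw [norm_mul, norm_pow, norm_neg, Complex.norm_real, Real.norm_of_nonneg h0.le,
            Nat.sub_right_comm]
          gcongr
          exact (norm_le_pi_norm w _).trans hb
      _ = (∑ j ∈ Finset.range k, lam ^ j) * b := by
          rw [← Finset.sum_mul, Fin.sum_univ_eq_sum_range (fun j => lam ^ (k - 1 - j)),
            Finset.sum_range_reflect (fun j => lam ^ j)]
      _ ≤ _ := by gcongr
  have hc : ‖(1 + (lam : ℂ))‖ ≤ 1 + a := by
    have : (1 + (lam : ℂ)) = ((1 + lam : ℝ) : ℂ) := by push_cast; rfl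
    rw [this, Complex.norm_real, Real.norm_of_nonneg (by linarith)]
    linarith
  unfold Hpt
  rw [norm_mul]
  calc _ ≤ (1 + a) * ((1 - a)⁻¹ * b) := by gcongr; linarith
    _ = b * (1 + a) / (1 - a) := by field_simp
    _ ≤ _ := by
      apply div_le_div_of_nonneg_left
      · have : 0 < 1 + a := by linarith
        positivity
      · positivity
      · nlinarith

theorem aux_norm_le_bEps {d : ℕ} (vP w : Fin d → ℂ) (ε : ℝ) (hw : w ∈ Metric.ball vP ε) :
    ‖w‖ ≤ bEps vP ε := by
  refine le_csSup ?_ ⟨w, hw, rfl⟩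
  refine ⟨‖vP‖ + ε, ?_⟩
  rintro _ ⟨u, hu, rfl⟩
  have h1 : ‖u - vP‖ < ε := by simpa [dist_eq_norm] using hu
  have h2 := norm_le_norm_add_norm_sub' u vP
  show ‖u‖ ≤ _
  linarith

theorem aux_tail_mem {d : ℕ} (vP : Fin d → ℂ) (lP ε : ℝ) (k n : ℕ) (i : Fin (k + n) → Fin d)
    (hi : i ∈ ItinSet vP lP ε (k + n)) :
    (fun j : Fin n => i (Fin.natAdd k j)) ∈ ItinSet vP lP ε n := by
  obtain ⟨p, hp, z, hz⟩ := hi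
  refine ⟨p, hp, (billiardMap p.1 p.2)^[k] z, fun j => ?_⟩
  have := hz (Fin.natAdd k j)
  rw [← Function.iterate_add_apply, add_comm (j : ℕ) k]
  simpa using this

/-- For every `(P, λ) ∈ Δ_ε` and every `n ≥ 1`, the set `Λ_ε(P,λ)` is covered by the
closed discs of radius `2 r_ε a_ε^n` centred at the points `H(P,λ,i)`, `i ∈ I_n^ε`. -/
theorem LamSet_subset_union_closedBall (d : ℕ) [NeZero d] (hd : 3 ≤ d) (vP : Fin d → ℂ) (lP ε : ℝ)
    (hconv : IsConvexPolygon vP) (hε : 0 < ε) (hlow : 0 < lP - ε) (hupp : lP + ε < 1)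
    (hball : ∀ w : Fin d → ℂ, ‖w - vP‖ < ε → IsConvexPolygon w)
    (q : (Fin d → ℂ) × ℝ) (hq : q ∈ Delta vP lP ε) (n : ℕ) (hn : 1 ≤ n) :
    LamSet vP lP ε q.1 q.2 ⊆
      ⋃ i ∈ ItinSet vP lP ε n,
        Metric.closedBall (Hpt q.1 q.2 i) (2 * rEps vP lP ε * aEps lP ε ^ n) := by
  obtain ⟨hq1, hq2⟩ := hq
  have hb := aux_norm_le_bEps vP q.1 ε hq1
  have hl0 : 0 < q.2 := hlow.trans hq2.1
  have hla : q.2 < aEps lP ε := hq2.2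
  have hclosed : IsClosed (⋃ i ∈ ItinSet vP lP ε n,
        Metric.closedBall (Hpt q.1 q.2 i) (2 * rEps vP lP ε * aEps lP ε ^ n)) :=
    (Set.toFinite (ItinSet vP lP ε n)).isClosed_biUnion fun _ _ => Metric.isClosed_closedBall
  intro x hx
  have hx' := Set.mem_iInter₂.1 hx n hn
  refine closure_minimal ?_ hclosed hx'
  rintro _ ⟨m, hm, i, hi, rfl⟩
  obtain ⟨k, rfl⟩ : ∃ k, m = k + n := ⟨m - n, by omega⟩
  refine Set.mem_iUnion₂.2 ⟨_, aux_tail_mem vP lP ε k n i hi, ?_⟩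
  rw [mem_closedBall, dist_eq_norm, aux_Hpt_split, add_sub_cancel_right, norm_mul, norm_pow,
    norm_neg, Complex.norm_real, Real.norm_of_nonneg hl0.le]
  have hH : ‖Hpt q.1 q.2 (fun j : Fin k => i (Fin.castAdd n j))‖ ≤ rEps vP lP ε :=
    aux_Hpt_norm q.1 q.2 (aEps lP ε) (bEps vP ε) hl0 hla hupp hb k _
  have hr : 0 ≤ rEps vP lP ε := (norm_nonneg _).trans hH
  have ha : 0 ≤ aEps lP ε := hl0.le.trans hla.le
  calc _ ≤ aEps lP ε ^ n * rEps vP lP ε := by gcongr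
    _ ≤ _ := by nlinarith [mul_nonneg (pow_nonneg ha n) hr]
end
end

section
/- Let (P, λ) ∈ Δ_ε. If Λ_ε(P,λ) ∩ S_P = ∅, then the outer billiard map T_{P,λ} is asymptotically periodic. -/
open MeasureTheory Set Filter Metric

noncomputable section

lemma cone_disj {d : ℕ} {v : Fin d → ℂ} {j k : Fin d} {z : ℂ} (hj : z ∈ cone v j)
    (hk : z ∈ cone v k) : j = k := by
  by_contra h
  have h1 := hj k (Ne.symm h)
  have h2 := hk j h
  simp only [cross] at h1 h2
  linarith

lemma cone_open {d : ℕ} (v : Fin d → ℂ) (k : Fin d) : IsOpen (cone v k) := by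
  have : cone v k = ⋂ j : Fin d, {z | j ≠ k → 0 < cross (v k - z) (v j - z)} := by
    ext z; simp [cone]
  rw [this]
  refine isOpen_iInter_of_finite fun j => ?_
  by_cases h : j = k
  · simp [h]
  · simp only [ne_eq, h, not_false_eq_true, forall_true_left]
    refine isOpen_lt continuous_const ?_
    unfold cross
    fun_prop

lemma bmap_cone {d : ℕ} {v : Fin d → ℂ} {lam : ℝ} {k : Fin d} {z : ℂ} (hz : z ∈ cone v k) :
    billiardMap v lam z = -(lam : ℂ) * z + (1 + (lam : ℂ)) * v k := by
  have h : ∃ k : Fin d, z ∈ cone v k := ⟨k, hz⟩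
  unfold billiardMap
  rw [dif_pos h, cone_disj h.choose_spec hz]

/-- A linear functional `cross u` strictly positive on the other vertices (seen from `v k`). -/
lemma hull_pos {d : ℕ} {v : Fin d → ℂ} {k : Fin d} {u : ℂ}
    (hu : ∀ j, j ≠ k → 0 < cross u (v j - v k)) {x : ℂ} (hx : x ∈ polygonSet v) :
    0 < cross u (x - v k) ∨ x = v k := by
  have hc : Convex ℝ {x : ℂ | 0 < cross u (x - v k) ∨ x = v k} := by
    intro a ha b hb s t hs ht hst
    have key : cross u (s • a + t • b - v k)
        = s * cross u (a - v k) + t * cross u (b - v k) := by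
      have : t = 1 - s := by linarith
      subst this
      simp [cross]; ring
    rcases hs.eq_or_lt with rfl | hs'
    · have : t = 1 := by linarith
      subst this
      simpa using hb
    rcases ht.eq_or_lt with rfl | ht'
    · have : s = 1 := by linarith
      subst this
      simpa using ha
    rcases ha with ha | rfl
    · left
      rw [key]
      rcases hb with hb | rfl
      · positivity
      · have : cross u (v k - v k) = 0 := by simp [cross]
        rw [this]; simp; positivity
    · rcases hb with hb | rfl
      · left
        rw [key]
        have : cross u (v k - v k) = 0 := by simp [cross]
        rw [this]; simp; positivity
      · right
        rw [← add_smul, hst, one_smul]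
  refine convexHull_min ?_ hc hx
  rintro _ ⟨j, rfl⟩
  by_cases h : j = k
  · right; rw [h]
  · left; exact hu j h

lemma exists_expose {d : ℕ} [NeZero d] (hd : 3 ≤ d) {v : Fin d → ℂ} (hv : IsConvexPolygon v)
    (k : Fin d) : ∃ u : ℂ, ∀ j, j ≠ k → 0 < cross u (v j - v k) := by
  obtain ⟨n, rfl⟩ : ∃ n, d = n + 3 := ⟨d - 3, by omega⟩
  have h12 : ∀ i : Fin (n + 3), i + 1 ≠ i := by
    intro i h
    have : (1 : Fin (n + 3)) = 0 := by simpa using h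
    simp [Fin.ext_iff] at this
  have h13 : k - 1 ≠ k + 1 := by
    intro h
    have h2 : (1 : Fin (n + 3)) + 1 = 0 := by
      have : k - 1 + 1 = k + 1 + 1 := by rw [h]
      rw [sub_add_cancel, add_assoc] at this
      simpa using this.symm
    have := congrArg Fin.val h2
    simp [Fin.val_add] at this
    rw [Nat.mod_eq_of_lt (by omega)] at this
    omega
  have hkk : k - 1 + 1 = k := sub_add_cancel k 1
  refine ⟨(v (k + 1) - v k) + (v k - v (k - 1)), fun j hj => ?_⟩
  have e : cross ((v (k + 1) - v k) + (v k - v (k - 1))) (v j - v k)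
      = cross (v (k + 1) - v k) (v j - v k) + cross (v k - v (k - 1)) (v j - v (k - 1)) := by
    simp [cross]; ring
  rw [e]
  have A : 0 ≤ cross (v (k + 1) - v k) (v j - v k) := by
    by_cases h : j = k + 1
    · subst h; simp [cross]; ring_nf; rfl
    · exact (hv k j hj h).le
  have B : j ≠ k - 1 → 0 < cross (v k - v (k - 1)) (v j - v (k - 1)) := by
    intro h
    have := hv (k - 1) j h (by rwa [hkk])
    rwa [hkk] at this
  by_cases h : j = k - 1
  · have A' := hv k j hj (by rw [h]; exact h13)
    have : cross (v k - v (k - 1)) (v j - v (k - 1)) = 0 := by subst h; simp [cross]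
    linarith
  · linarith [B h]

lemma poly_inj {d : ℕ} [NeZero d] (hd : 3 ≤ d) {v : Fin d → ℂ} (hv : IsConvexPolygon v) :
    Function.Injective v := by
  intro j k h
  by_contra hne
  obtain ⟨u, hu⟩ := exists_expose hd hv k
  have := hu j hne
  rw [h] at this
  simp [cross] at this

lemma step_back {d : ℕ} [NeZero d] (hd : 3 ≤ d) {v : Fin d → ℂ} (hv : IsConvexPolygon v)
    {lam : ℝ} (hl : 0 < lam) {k : Fin d} {x : ℂ} (hx : x ∈ closure (cone v k))
    (hs : x ∉ singSet v)
    (hT : -(lam : ℂ) * x + (1 + (lam : ℂ)) * v k ∈ polygonSet v) : x = v k := by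
  by_cases hc : ∃ j, x ∈ cone v j
  · exfalso
    obtain ⟨j, hj⟩ := hc
    obtain ⟨y, hy1, hy2⟩ := mem_closure_iff.1 hx _ (cone_open v j) hj
    obtain rfl := cone_disj hy1 hy2
    have hu : ∀ i, i ≠ j → 0 < cross (v j - x) (v i - v j) := by
      intro i hi
      have := hj i hi
      simp only [cross, Complex.sub_re, Complex.sub_im] at this ⊢
      nlinarith
    have hne : v j - x ≠ 0 := by
      intro h0
      obtain ⟨i, hi⟩ : ∃ i : Fin d, i ≠ j := by
        have : Nontrivial (Fin d) := Fin.nontrivial_iff_two_le.2 (by omega)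
        exact exists_ne j
      have := hu i hi
      rw [h0] at this
      simp [cross] at this
    rcases hull_pos hu hT with h | h
    · simp [cross] at h
      nlinarith
    · have : (lam : ℂ) * (v j - x) = 0 := by linear_combination h
      rcases mul_eq_zero.1 this with h' | h'
      · exact hl.ne' (by exact_mod_cast h')
      · exact hne h'
  · push Not at hc
    have hP : x ∈ polygonSet v := by
      by_contra h
      exact hs ⟨h, hc⟩
    obtain ⟨u, hu⟩ := exists_expose hd hv k
    rcases hull_pos hu hP with h | h
    · rcases hull_pos hu hT with h2 | h2
      · exfalso
        have : cross u (-(lam : ℂ) * x + (1 + (lam : ℂ)) * v k - v k)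
            = - lam * cross u (x - v k) := by
          simp [cross]; ring
        rw [this] at h2
        nlinarith
      · have : (lam : ℂ) * (v k - x) = 0 := by linear_combination h2
        rcases mul_eq_zero.1 this with h' | h'
        · exact absurd (by exact_mod_cast h') hl.ne'
        · linear_combination -h'
    · exact h

lemma not_twice {d : ℕ} (hd : 3 ≤ d) {v : Fin d → ℂ} {lam : ℝ} (hl : 0 < lam) {k : Fin d} {z : ℂ}
    (hz : z ∈ cone v k) : billiardMap v lam z ∉ cone v k := by
  rw [bmap_cone hz]
  intro h
  obtain ⟨i, hi⟩ : ∃ i : Fin d, i ≠ k := by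
    have : Nontrivial (Fin d) := Fin.nontrivial_iff_two_le.2 (by omega)
    exact exists_ne k
  have h1 := hz i hi
  have h2 := h i hi
  have : cross (v k - (-(lam : ℂ) * z + (1 + (lam : ℂ)) * v k))
      (v i - (-(lam : ℂ) * z + (1 + (lam : ℂ)) * v k)) =
      -lam * cross (v k - z) (v i - z) := by
    simp [cross]; ring
  rw [this] at h2
  nlinarith

lemma nonsing_iter {d : ℕ} {v : Fin d → ℂ} {lam : ℝ} {z : ℂ} (h : NonSingular v lam z) (n : ℕ) :
    NonSingular v lam ((billiardMap v lam)^[n] z) := by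
  intro m
  rw [← Function.iterate_add_apply]
  exact h _

lemma norm_iter {d : ℕ} {v : Fin d → ℂ} {lam b C : ℝ} (hl : 0 < lam)
    (hb : ∀ k, ‖v k‖ ≤ b) (hC : (1 + lam) * b = (1 - lam) * C) (hC0 : 0 ≤ C) {z : ℂ}
    (h : NonSingular v lam z) (n : ℕ) :
    ‖(billiardMap v lam)^[n] z‖ ≤ lam ^ n * ‖z‖ + (1 - lam ^ n) * C := by
  induction n with
  | zero => simp
  | succ n ih =>
    obtain ⟨k, hk⟩ := mem_iUnion.1 (h n)
    rw [Function.iterate_succ_apply', bmap_cone hk]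
    have h1 : ‖-(lam : ℂ) * ((billiardMap v lam)^[n] z)‖ = lam * ‖(billiardMap v lam)^[n] z‖ := by
      rw [norm_mul, norm_neg, Complex.norm_real, Real.norm_of_nonneg hl.le]
    have h2 : ‖(1 + (lam : ℂ)) * v k‖ = (1 + lam) * ‖v k‖ := by
      have : (1 + (lam : ℂ)) = ((1 + lam : ℝ) : ℂ) := by push_cast; rfl
      rw [norm_mul, this, Complex.norm_real, Real.norm_of_nonneg (by linarith)]
    have h3 : (1 + lam) * ‖v k‖ ≤ (1 + lam) * b := by
      have := hb k
      gcongr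
    have h4 := mul_le_mul_of_nonneg_left ih hl.le
    calc _ ≤ _ := norm_add_le _ _
      _ ≤ lam * (lam ^ n * ‖z‖ + (1 - lam ^ n) * C) + (1 - lam) * C := by
        rw [h1, h2]; linarith
      _ = _ := by ring

lemma iter_eq {d : ℕ} {v : Fin d → ℂ} {lam : ℝ} {z : ℂ} {k : ℕ → Fin d}
    (h : ∀ n, (billiardMap v lam)^[n] z ∈ cone v (k n)) (n : ℕ) :
    (billiardMap v lam)^[n] z = (-(lam : ℂ)) ^ n * z + Hpt v lam (fun j : Fin n => k j) := by
  induction n with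
  | zero => simp [Hpt]
  | succ n ih =>
    rw [Function.iterate_succ_apply', bmap_cone (h n), ih]
    unfold Hpt
    rw [Fin.sum_univ_castSucc]
    have : ∀ j : Fin n, (-(lam : ℂ)) ^ (n + 1 - ((Fin.castSucc j : Fin (n+1)) : ℕ) - 1) *
        v (k ((Fin.castSucc j : Fin (n+1)) : ℕ))
        = -(lam : ℂ) * ((-(lam : ℂ)) ^ (n - (j : ℕ) - 1) * v (k j)) := by
      intro j
      have hj := j.2
      have : n + 1 - (j : ℕ) - 1 = (n - (j : ℕ) - 1) + 1 := by omega
      rw [Fin.val_castSucc, this, pow_succ]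
      ring
    rw [Finset.sum_congr rfl (fun j _ => this j), ← Finset.mul_sum]
    simp
    ring

/-- Limits of late points of orbits inside `K_ε` belong to the limit set. -/
lemma lim_mem_Lam {d : ℕ} {vP : Fin d → ℂ} {lP ε : ℝ} {q : (Fin d → ℂ) × ℝ}
    (hq : q ∈ Delta vP lP ε) (hl : 0 < q.2) (hl1 : q.2 < 1) {F : Filter ℕ} [F.NeBot]
    {z : ℕ → ℂ} {n : ℕ → ℕ} (hz : ∀ N, NonSingular q.1 q.2 (z N))
    (hK : ∀ N m, (billiardMap q.1 q.2)^[m] (z N) ∈ Keps vP lP ε)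
    (hn : Tendsto n F atTop) {x : ℂ}
    (hx : Tendsto (fun N => (billiardMap q.1 q.2)^[n N] (z N)) F (nhds x)) :
    x ∈ LamSet vP lP ε q.1 q.2 := by
  have hz' : ∀ N m, ∃ k, (billiardMap q.1 q.2)^[m] (z N) ∈ cone q.1 k :=
    fun N m => mem_iUnion.1 (hz N m)
  choose k hk using hz'
  have hH : Tendsto (fun N => Hpt q.1 q.2 (fun j : Fin (n N) => k N j)) F (nhds x) := by
    have h0 : Tendsto (fun N => (-(q.2 : ℂ)) ^ (n N) * z N) F (nhds 0) := by
      have hp : Tendsto (fun N => q.2 ^ (n N) * rEps vP lP ε) F (nhds (0 * rEps vP lP ε)) :=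
        ((tendsto_pow_atTop_nhds_zero_of_lt_one hl.le hl1).comp hn).mul_const _
      rw [zero_mul] at hp
      refine squeeze_zero_norm (fun N => ?_) hp
      rw [norm_mul, norm_pow, norm_neg, Complex.norm_real, Real.norm_of_nonneg hl.le]
      have := hK N 0
      simp [Keps] at this
      gcongr
    have := hx.sub h0
    rw [sub_zero] at this
    refine this.congr fun N => ?_
    rw [iter_eq (hk N) (n N)]
    ring
  simp only [LamSet, mem_iInter]
  intro m _
  refine mem_closure_of_tendsto hH ?_
  filter_upwards [hn.eventually_ge_atTop m] with N hN
  exact ⟨n N, hN, _, ⟨q, hq, z N, fun j => ⟨hk N j, hK N j⟩⟩, rfl⟩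

lemma gap {d : ℕ} [NeZero d] (hd : 3 ≤ d) {vP : Fin d → ℂ} {lP ε : ℝ} {q : (Fin d → ℂ) × ℝ}
    (hv : IsConvexPolygon q.1)
    (hq : q ∈ Delta vP lP ε) (hl : 0 < q.2) (hl1 : q.2 < 1)
    (hsep : LamSet vP lP ε q.1 q.2 ∩ singSet q.1 = ∅) :
    ∃ m : ℕ, ∃ δ > 0, ∀ z, NonSingular q.1 q.2 z →
      (∀ n, (billiardMap q.1 q.2)^[n] z ∈ Keps vP lP ε) →
      ∀ n ≥ m, ∃ k, ball ((billiardMap q.1 q.2)^[n] z) δ ⊆ cone q.1 k := by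
  by_contra! hcon
  have hcon' : ∀ N : ℕ, ∃ z, ∃ n ≥ N, NonSingular q.1 q.2 z ∧
      (∀ n, (billiardMap q.1 q.2)^[n] z ∈ Keps vP lP ε) ∧
      ∀ k, ¬ ball ((billiardMap q.1 q.2)^[n + 2] z) (1 / ((N : ℝ) + 1)) ⊆ cone q.1 k := by
    intro N
    obtain ⟨z, h1, h2, n, hn, h3⟩ := hcon (N + 2) (1 / ((N : ℝ) + 1)) (by positivity)
    refine ⟨z, n - 2, by omega, h1, h2, ?_⟩
    rwa [show n - 2 + 2 = n by omega]
  choose z n hn hz hK hball using hcon'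
  set T := billiardMap q.1 q.2 with hT
  let U : Ultrafilter ℕ := hyperfilter ℕ
  have hU : (U : Filter ℕ) ≤ atTop := by
    rw [← Nat.cofinite_eq_atTop]; exact hyperfilter_le_cofinite
  have hnt : Tendsto n U atTop :=
    tendsto_atTop_mono hn (tendsto_id.mono_left hU)
  have hlim : ∀ j : ℕ, ∃ x, Tendsto (fun N => T^[n N + j] (z N)) U (nhds x) := by
    intro j
    have hc : IsCompact (Keps vP lP ε) := isCompact_closedBall _ _
    obtain ⟨x, -, hx⟩ := hc.ultrafilter_le_nhds (U.map (fun N => T^[n N + j] (z N)))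
      (by
        rw [le_principal_iff]
        exact Filter.Eventually.of_forall (f := (U : Filter ℕ)) fun N => hK N _)
    exact ⟨x, hx⟩
  have hidx : ∀ j : ℕ, ∃ k, ∀ᶠ N in U, T^[n N + j] (z N) ∈ cone q.1 k := by
    intro j
    have : ∀ᶠ N in (U : Filter ℕ), ∃ k ∈ (Set.univ : Set (Fin d)), T^[n N + j] (z N) ∈ cone q.1 k :=
      Filter.Eventually.of_forall fun N => by
        obtain ⟨k, hk⟩ := mem_iUnion.1 (hz N (n N + j))
        exact ⟨k, mem_univ _, hk⟩
    obtain ⟨k, -, hk⟩ := (Ultrafilter.eventually_exists_mem_iff Set.finite_univ).1 this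
    exact ⟨k, hk⟩
  choose x hx using hlim
  choose k hk using hidx
  have hxs : ∀ j, x j ∉ singSet q.1 := by
    intro j hj
    have : x j ∈ LamSet vP lP ε q.1 q.2 :=
      lim_mem_Lam hq hl hl1 hz hK (n := fun N => n N + j)
        (tendsto_atTop_mono (fun N => Nat.le_add_right _ _) hnt) (hx j)
    have h : x j ∈ LamSet vP lP ε q.1 q.2 ∩ singSet q.1 := ⟨this, hj⟩
    rw [hsep] at h
    exact h
  have hxc : ∀ j, x j ∈ closure (cone q.1 (k j)) := fun j => mem_closure_of_tendsto (hx j) (hk j)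
  have hrec : ∀ j, x (j + 1) = -(q.2 : ℂ) * x j + (1 + (q.2 : ℂ)) * q.1 (k j) := by
    intro j
    refine tendsto_nhds_unique (hx (j + 1)) ?_
    have : Tendsto (fun N => -(q.2 : ℂ) * (T^[n N + j] (z N)) + (1 + (q.2 : ℂ)) * q.1 (k j)) U
        (nhds (-(q.2 : ℂ) * x j + (1 + (q.2 : ℂ)) * q.1 (k j))) :=
      ((hx j).const_mul _).add_const _
    refine this.congr' ?_
    filter_upwards [hk j] with N hN
    rw [← add_assoc, Function.iterate_succ_apply', hT, bmap_cone hN]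
  have h2P : x 2 ∈ polygonSet q.1 := by
    by_contra h
    refine hxs 2 ⟨h, fun j hj => ?_⟩
    obtain ⟨ρ, hρ, hsub⟩ := Metric.isOpen_iff.1 (cone_open q.1 j) _ hj
    have e1 : ∀ᶠ N in (U : Filter ℕ), dist (T^[n N + 2] (z N)) (x 2) < ρ / 2 :=
      (Metric.tendsto_nhds.1 (hx 2)) _ (by positivity)
    have e2 : ∀ᶠ N : ℕ in (U : Filter ℕ), 1 / ((N : ℝ) + 1) < ρ / 2 :=
      hU ((tendsto_one_div_add_atTop_nhds_zero_nat (𝕜 := ℝ)).eventually_lt_const (by positivity))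
    obtain ⟨N, h1, h2⟩ := (e1.and e2).exists
    refine hball N j (fun y hy => hsub ?_)
    rw [mem_ball] at hy ⊢
    linarith [dist_triangle y (T^[n N + 2] (z N)) (x 2)]
  have hx1 : x 1 = q.1 (k 1) := step_back hd hv hl (hxc 1) (hxs 1) (by rw [← hrec 1]; exact h2P)
  have hx0 : x 0 = q.1 (k 0) := by
    refine step_back hd hv hl (hxc 0) (hxs 0) ?_
    rw [← hrec 0, zero_add, hx1]
    exact subset_convexHull ℝ _ (mem_range_self _)
  have heq : q.1 (k 1) = q.1 (k 0) := by
    rw [← hx1]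
    have := hrec 0
    rw [hx0] at this
    rw [zero_add] at this
    rw [this]; ring
  have hkk := poly_inj hd hv heq
  obtain ⟨N, h0, h1⟩ := ((hk 0).and (hk 1)).exists
  rw [hkk, Function.iterate_succ_apply'] at h1
  exact not_twice hd hl h0 h1

lemma follow {d : ℕ} {v : Fin d → ℂ} {lam δ : ℝ} (hl : 0 < lam) (hl1 : lam < 1) {x y : ℂ}
    (hx : ∀ n, ∃ k, ball ((billiardMap v lam)^[n] x) δ ⊆ cone v k) (hxy : dist x y < δ) (n : ℕ) :
    dist ((billiardMap v lam)^[n] x) ((billiardMap v lam)^[n] y) = lam ^ n * dist x y ∧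
    ∃ k, (billiardMap v lam)^[n] x ∈ cone v k ∧ (billiardMap v lam)^[n] y ∈ cone v k := by
  have hδ : 0 < δ := dist_nonneg.trans_lt hxy
  have aux : ∀ n, dist ((billiardMap v lam)^[n] x) ((billiardMap v lam)^[n] y) = lam ^ n * dist x y →
      ∃ k, (billiardMap v lam)^[n] x ∈ cone v k ∧ (billiardMap v lam)^[n] y ∈ cone v k := by
    intro n h
    obtain ⟨k, hk⟩ := hx n
    refine ⟨k, hk (mem_ball_self hδ), hk ?_⟩
    rw [mem_ball, dist_comm, h]
    have : lam ^ n ≤ 1 := pow_le_one₀ hl.le hl1.le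
    nlinarith [dist_nonneg (x := x) (y := y)]
  have main : dist ((billiardMap v lam)^[n] x) ((billiardMap v lam)^[n] y) = lam ^ n * dist x y := by
    induction n with
    | zero => simp
    | succ n ih =>
      obtain ⟨k, h1, h2⟩ := aux n ih
      rw [Function.iterate_succ_apply', Function.iterate_succ_apply', bmap_cone h1, bmap_cone h2,
        dist_add_right, dist_eq_norm, ← mul_sub, norm_mul, ← dist_eq_norm, ih, norm_neg,
        Complex.norm_real, Real.norm_of_nonneg hl.le]
      ring
  exact ⟨main, aux n main⟩

lemma omega_eq {T : ℂ → ℂ} {z w : ℂ} {M p : ℕ} (hp : 1 ≤ p) (hw : T^[p] w = w)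
    (h : Tendsto (fun j => dist (T^[M + j] z) (T^[j] w)) atTop (nhds 0)) :
    omegaSet T z = Set.range fun n : ℕ => T^[n] w := by
  have hper : Function.IsPeriodicPt T p w := hw
  apply Set.Subset.antisymm
  · intro x hx
    have hfin : (Set.range fun n : ℕ => T^[n] w).Finite := by
      refine ((Set.finite_Iio p).image (fun n => T^[n] w)).subset ?_
      rintro _ ⟨n, rfl⟩
      exact ⟨n % p, Nat.mod_lt _ hp, hper.iterate_mod_apply n⟩
    rw [← hfin.isClosed.closure_eq, Metric.mem_closure_iff]
    intro e he
    obtain ⟨J, hJ⟩ := eventually_atTop.1 (h.eventually_lt_const (half_pos he))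
    have := mem_iInter.1 hx (M + J)
    obtain ⟨_, ⟨n, hn, rfl⟩, hd⟩ := Metric.mem_closure_iff.1 this _ (half_pos he)
    have hn' : M + J ≤ n := hn
    refine ⟨_, ⟨n - M, rfl⟩, ?_⟩
    have h2 := hJ (n - M) (by omega)
    rw [show M + (n - M) = n by omega] at h2
    dsimp only at hd ⊢
    linarith [dist_triangle x (T^[n] z) (T^[n - M] w)]
  · rintro _ ⟨j, rfl⟩
    refine mem_iInter.2 fun m => ?_
    rw [Metric.mem_closure_iff]
    intro e he
    obtain ⟨J, hJ⟩ := eventually_atTop.1 (h.eventually_lt_const he)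
    have h1 : J + m ≤ j + (J + m) * p := by nlinarith
    refine ⟨_, ⟨M + (j + (J + m) * p), ?_, rfl⟩, ?_⟩
    · show m ≤ _
      omega
    · have h2 := hJ (j + (J + m) * p) (by omega)
      rw [Function.iterate_add_apply T j, (hper.const_mul (J + m)).eq] at h2
      rw [dist_comm]
      exact h2

/-- Let `(P, λ) ∈ Δ_ε`. If `Λ_ε(P,λ) ∩ S_P = ∅`, then `T_{P,λ}` is asymptotically
periodic. -/
theorem asymptotically_periodic_of_separated (d : ℕ) [NeZero d] (hd : 3 ≤ d) (vP : Fin d → ℂ) (lP ε : ℝ)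
    (hconv : IsConvexPolygon vP) (hε : 0 < ε) (hlow : 0 < lP - ε) (hupp : lP + ε < 1)
    (hball : ∀ w : Fin d → ℂ, ‖w - vP‖ < ε → IsConvexPolygon w)
    (q : (Fin d → ℂ) × ℝ) (hq : q ∈ Delta vP lP ε)
    (hsep : LamSet vP lP ε q.1 q.2 ∩ singSet q.1 = ∅) :
    AsymptoticallyPeriodic q.1 q.2 := by
  obtain ⟨hq1, hq2⟩ := id hq
  have hv : IsConvexPolygon q.1 := hball _ (by rw [← dist_eq_norm]; exact hq1)
  obtain ⟨hla, hlb⟩ := hq2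
  have hl : 0 < q.2 := by linarith
  have hl1 : q.2 < 1 := by linarith
  obtain ⟨m, δ, hδ, hgap⟩ := gap hd hv hq hl hl1 hsep
  -- norm bounds
  have hbdd : BddAbove ((fun w : Fin d → ℂ => ‖w‖) '' Metric.ball vP ε) := by
    refine ⟨‖vP‖ + ε, ?_⟩
    rintro _ ⟨w, hw, rfl⟩
    rw [mem_ball, dist_eq_norm] at hw
    have := norm_le_norm_add_norm_sub' w vP
    dsimp only
    linarith
  have hqb : ‖q.1‖ ≤ bEps vP ε := le_csSup hbdd ⟨q.1, hq1, rfl⟩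
  have hbk : ∀ k, ‖q.1 k‖ ≤ bEps vP ε := fun k => (norm_le_pi_norm _ k).trans hqb
  have hb0 : 0 < bEps vP ε := by
    refine lt_of_lt_of_le (norm_pos_iff.2 fun h => ?_) hqb
    have : Nontrivial (Fin d) := Fin.nontrivial_iff_two_le.2 (by omega)
    obtain ⟨i, hi⟩ := exists_ne (0 : Fin d)
    exact hi (poly_inj hd hv (by simp [h]))
  set b := bEps vP ε with hbdef
  obtain ⟨C, hCdef⟩ : ∃ C, C = (1 + q.2) * b / (1 - q.2) := ⟨_, rfl⟩
  have h1l : 0 < 1 - q.2 := by linarith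
  have hC : (1 + q.2) * b = (1 - q.2) * C := by rw [hCdef]; field_simp
  have hC0 : 0 ≤ C := by rw [hCdef]; positivity
  have hCr : C < rEps vP lP ε := by
    unfold rEps aEps
    rw [hCdef, ← hbdef]
    have ha : 0 < 1 - (lP + ε) := by linarith
    rw [div_lt_div_iff₀ h1l (by positivity)]
    have e1 : (1 + q.2) * b < b * (1 + (lP + ε)) := by nlinarith
    have e2 : (1 - (lP + ε)) ^ 2 < 1 - q.2 := by nlinarith
    have e3 : 0 < (1 + q.2) * b := by positivity
    have e4 : 0 < (1 - (lP + ε)) ^ 2 := by positivity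
    nlinarith
  have hnorm := fun z (hz : NonSingular q.1 q.2 z) n => norm_iter hl hbk hC hC0 hz n
  have hpow : ∀ n : ℕ, q.2 ^ n ≤ 1 := fun n => pow_le_one₀ hl.le hl1.le
  have hpow0 : ∀ n : ℕ, 0 < q.2 ^ n := fun n => pow_pos hl n
  have hinv : ∀ z, NonSingular q.1 q.2 z → ‖z‖ ≤ rEps vP lP ε →
      ∀ n, (billiardMap q.1 q.2)^[n] z ∈ Keps vP lP ε := by
    intro z hz hzr n
    simp only [Keps, mem_closedBall, dist_zero_right]
    have h1 := hnorm z hz n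
    nlinarith [hpow n, hpow0 n]
  have hK : IsCompact (Keps vP lP ε) := isCompact_closedBall _ _
  set T := billiardMap q.1 q.2 with hT
  have hpt0 : Tendsto (fun n : ℕ => q.2 ^ n) atTop (nhds 0) :=
    tendsto_pow_atTop_nhds_zero_of_lt_one hl.le hl1
  have henter : ∀ z, NonSingular q.1 q.2 z → ∃ N, ‖T^[N] z‖ ≤ rEps vP lP ε := by
    intro z hz
    have : Tendsto (fun n : ℕ => q.2 ^ n * ‖z‖ + C) atTop (nhds (0 * ‖z‖ + C)) :=
      (hpt0.mul_const _).add_const _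
    rw [zero_mul, zero_add] at this
    obtain ⟨N, hN⟩ := (this.eventually_lt_const hCr).exists
    refine ⟨N, (hnorm z hz N).trans ?_⟩
    nlinarith [hpow0 N]
  constructor
  · -- finitely many periodic points
    have hper : ∀ z, NonSingular q.1 q.2 z → ∀ p, 1 ≤ p → T^[p] z = z →
        z ∈ Keps vP lP ε ∧ ∀ n, ∃ k, ball (T^[n] z) δ ⊆ cone q.1 k := by
      intro z hz p hp hpz
      have hpp : Function.IsPeriodicPt T p z := hpz
      obtain ⟨N, hN⟩ := henter z hz
      have hinN := hinv _ (nonsing_iter hz N) hN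
      have hsh : ∀ n s : ℕ, T^[n + s * p] z = T^[n] z := by
        intro n s
        rw [Function.iterate_add_apply, (hpp.const_mul s).eq]
      have key : ∀ n, ∃ t ≥ m, T^[n] z = T^[t] (T^[N] z) := by
        intro n
        have h1 : N + m ≤ (N + m) * p := Nat.le_mul_of_pos_right _ hp
        refine ⟨n + (N + m) * p - N, by omega, ?_⟩
        rw [← Function.iterate_add_apply, ← hsh n (N + m),
          show n + (N + m) * p - N + N = n + (N + m) * p by omega]
      constructor
      · obtain ⟨t, -, ht⟩ := key 0
        have := hinN t
        rw [← ht] at this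
        exact this
      · intro n
        obtain ⟨t, htm, ht⟩ := key n
        rw [ht]
        exact hgap _ (nonsing_iter hz N) hinN t htm
    obtain ⟨t, -, htf, hcov⟩ := hK.finite_cover_balls (half_pos hδ)
    refine (htf.biUnion (t := fun c => {z : ℂ | NonSingular q.1 q.2 z ∧
      ∃ p : ℕ, 1 ≤ p ∧ T^[p] z = z} ∩ ball c (δ / 2)) fun c _ => ?_).subset ?_
    · apply Set.Subsingleton.finite
      rintro x ⟨⟨hx, p, hp, hpx⟩, hxc⟩ y ⟨⟨hy, p', hp', hpy⟩, hyc⟩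
      have hxy : dist x y < δ := by
        rw [mem_ball] at hxc hyc
        linarith [dist_triangle_right x y c]
      have h1 := (follow hl hl1 (hper x hx p hp hpx).2 hxy (p' * p)).1
      have hpp : Function.IsPeriodicPt T p x := hpx
      have hpp' : Function.IsPeriodicPt T p' y := hpy
      rw [← hT, (hpp.const_mul p').eq, (hpp'.mul_const p).eq] at h1
      have h2 : q.2 ^ (p' * p) < 1 := by
        apply pow_lt_one₀ hl.le hl1
        have := Nat.mul_pos hp' hp
        omega
      apply dist_le_zero.1
      nlinarith [dist_nonneg (x := x) (y := y)]
    · rintro z ⟨hz, p, hp, hpz⟩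
      have := hcov (hper z hz p hp hpz).1
      simp only [mem_iUnion] at this ⊢
      obtain ⟨c, hc, hzc⟩ := this
      exact ⟨c, hc, ⟨hz, p, hp, hpz⟩, hzc⟩
  · intro z hz
    obtain ⟨N, hN⟩ := henter z hz
    have hz1 := nonsing_iter hz N
    have hinN := hinv _ hz1 hN
    obtain ⟨a, -, φ, hφ, hlim⟩ := hK.tendsto_subseq (x := fun n => T^[m + n] (T^[N] z))
      (fun n => hinN _)
    obtain ⟨J, hJ⟩ := Metric.cauchySeq_iff.1 hlim.cauchySeq δ hδ
    have hd1 := hJ J le_rfl (J + 1) (by omega)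
    have hφJ : φ J < φ (J + 1) := hφ (by omega)
    obtain ⟨p, hp, hpe⟩ : ∃ p, 1 ≤ p ∧ φ (J + 1) = p + φ J :=
      ⟨φ (J + 1) - φ J, by omega, by omega⟩
    set L := m + φ J + N with hL
    have e1 : T^[m + φ J] (T^[N] z) = T^[L] z := by rw [hL, Function.iterate_add_apply T (m + φ J)]
    have hg : ∀ n, ∃ k, ball (T^[n] (T^[L] z)) δ ⊆ cone q.1 k := by
      intro n
      rw [← e1, ← Function.iterate_add_apply]
      exact hgap _ hz1 hinN _ (by omega)
    have e2 : T^[m + φ (J + 1)] (T^[N] z) = T^[p] (T^[L] z) := by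
      rw [← e1, hpe, show m + (p + φ J) = p + (m + φ J) by omega,
        Function.iterate_add_apply T p]
    simp only [Function.comp] at hd1
    rw [e1, e2] at hd1
    obtain ⟨y, hy⟩ : ∃ y, y = T^[L] z := ⟨_, rfl⟩
    rw [← hy] at hd1
    simp only [← hy] at hg
    have hdist : ∀ k, dist (T^[k * p] y) (T^[(k + 1) * p] y) ≤ δ * (q.2 ^ p) ^ k := by
      intro k
      have := (follow hl hl1 hg hd1 (k * p)).1
      rw [← hT, ← Function.iterate_add_apply] at this
      rw [add_mul, one_mul, this, ← pow_mul, mul_comm p k, mul_comm δ]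
      exact mul_le_mul_of_nonneg_left hd1.le (hpow0 _).le
    have hqp : q.2 ^ p < 1 := pow_lt_one₀ hl.le hl1 (by omega)
    have hcau := cauchySeq_of_le_geometric (f := fun k => T^[k * p] y) (q.2 ^ p) δ hqp hdist
    obtain ⟨w, hw⟩ := cauchySeq_tendsto_of_complete hcau
    have hgk : ∀ k n, ∃ j, ball (T^[n] (T^[k * p] y)) δ ⊆ cone q.1 j := by
      intro k n
      rw [← Function.iterate_add_apply]
      exact hg _
    have hev : ∀ᶠ k in atTop, dist (T^[k * p] y) w < δ := Metric.tendsto_nhds.1 hw δ hδ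
    obtain ⟨k, hkd⟩ := hev.exists
    have hwns : NonSingular q.1 q.2 w := by
      intro n
      obtain ⟨j, -, hj⟩ := (follow hl hl1 (hgk k) hkd n).2
      exact mem_iUnion.2 ⟨j, hj⟩
    have hwp : T^[p] w = w := by
      have h1 : Tendsto (fun k => T^[(k + 1) * p] y) atTop (nhds w) :=
        hw.comp (tendsto_add_atTop_nat 1)
      refine tendsto_nhds_unique ?_ h1
      rw [tendsto_iff_dist_tendsto_zero] at hw ⊢
      refine squeeze_zero' (Eventually.of_forall fun _ => dist_nonneg) ?_ hw
      filter_upwards [hev] with i hi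
      have := (follow hl hl1 (hgk i) hi p).1
      rw [← hT, ← Function.iterate_add_apply, add_comm p, ← Nat.succ_mul] at this
      rw [this]
      have := dist_nonneg (x := T^[i * p] y) (y := w)
      nlinarith
    refine ⟨w, hwns, ⟨p, hp, hwp⟩, omega_eq (M := k * p + L) hp hwp ?_⟩
    have h0 : Tendsto (fun j : ℕ => q.2 ^ j * dist (T^[k * p] y) w) atTop
        (nhds (0 * dist (T^[k * p] y) w)) := hpt0.mul_const _
    rw [zero_mul] at h0
    refine h0.congr fun j => ?_
    rw [← (follow hl hl1 (hgk k) hkd j).1, ← hT, hy, ← Function.iterate_add_apply,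
      ← Function.iterate_add_apply, show j + k * p + L = k * p + L + j by omega]
end
end

section
/- The set of pairs (P, λ) ∈ P_d × (0,1) for which the outer billiard map T_{P,λ} has a singular connection of some order n ≥ 2 has Lebesgue measure zero; equivalently, for almost every (P, λ) ∈ P_d × (0,1), T_{P,λ} has no singular connections. -/
open MeasureTheory Set Filter Metric

noncomputable section

/-- `T_{P,λ}` has a singular connection of some order `n ≥ 2`: there is an orbit segment
`x = x_1, …, x_n = T^{n-1}(x)` with `x_1, …, x_{n-1} ∉ S_P`, `x_n ∈ S_P`, and such that
the segment `[x_1, x_n]` contains a side of the polygon. -/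
def HasSingularConnection {d : ℕ} [NeZero d] (v : Fin d → ℂ) (lam : ℝ) : Prop :=
  ∃ n : ℕ, 2 ≤ n ∧ ∃ x : ℂ,
    (∀ m : ℕ, m < n - 1 → (billiardMap v lam)^[m] x ∈ ⋃ k : Fin d, cone v k) ∧
    (billiardMap v lam)^[n - 1] x ∈ singSet v ∧
    ∃ k : Fin d, segment ℝ (v k) (v (k + 1)) ⊆ segment ℝ x ((billiardMap v lam)^[n - 1] x)

/-- The affine form vanishing on the line through the `k`-th side. -/
def sideForm {d : ℕ} [NeZero d] (v : Fin d → ℂ) (k : Fin d) (z : ℂ) : ℝ :=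
  cross (v (k + 1) - v k) (z - v k)

/-- The value of the side form along an orbit (divided by `1 + lam`); the list holds the
itinerary after the first symbol `a`, latest symbol first. -/
def orbitForm {d : ℕ} [NeZero d] (k a : Fin d) : List (Fin d) → (Fin d → ℂ) × ℝ → ℝ
  | [], q => sideForm q.1 k (q.1 a)
  | b :: l, q => sideForm q.1 k (q.1 b) - q.2 * orbitForm k a l q

/-- The same, as a polynomial in `lam`. -/
def orbitPoly {d : ℕ} [NeZero d] (k a : Fin d) (v : Fin d → ℂ) : List (Fin d) → Polynomial ℝ
  | [] => Polynomial.C (sideForm v k (v a))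
  | b :: l => Polynomial.C (sideForm v k (v b)) - Polynomial.X * orbitPoly k a v l

lemma orbitPoly_eval {d : ℕ} [NeZero d] (k a : Fin d) (v : Fin d → ℂ) (lam : ℝ)
    (l : List (Fin d)) : (orbitPoly k a v l).eval lam = orbitForm k a l (v, lam) := by
  induction l with
  | nil => simp [orbitPoly, orbitForm]
  | cons b l ih => simp [orbitPoly, orbitForm, ih]

lemma orbitPoly_ne_zero {d : ℕ} [NeZero d] (k a : Fin d) (v : Fin d → ℂ)
    (h : sideForm v k (v a) ≠ 0) (l : List (Fin d)) : orbitPoly k a v l ≠ 0 := by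
  induction l with
  | nil => simpa [orbitPoly] using h
  | cons b l ih =>
    intro h0
    have h1 := congrArg (Polynomial.eval 0) h0
    simp only [orbitPoly, Polynomial.eval_sub, Polynomial.eval_C, Polynomial.eval_mul,
      Polynomial.eval_X, zero_mul, sub_zero, Polynomial.eval_zero] at h1
    rw [orbitPoly, h1] at h0
    simp [ih] at h0

lemma continuous_sideForm {d : ℕ} [NeZero d] (k b : Fin d) :
    Continuous fun q : (Fin d → ℂ) × ℝ => sideForm q.1 k (q.1 b) := by
  have h : ∀ j : Fin d, Continuous fun q : (Fin d → ℂ) × ℝ => q.1 j := fun j =>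
    (continuous_apply j).comp continuous_fst
  have hr := fun j => Complex.continuous_re.comp (h j)
  have hi := fun j => Complex.continuous_im.comp (h j)
  simp only [sideForm, cross, Complex.sub_re, Complex.sub_im]
  exact (((hr _).sub (hr _)).mul ((hi _).sub (hi _))).sub
    (((hi _).sub (hi _)).mul ((hr _).sub (hr _)))

lemma continuous_orbitForm {d : ℕ} [NeZero d] (k a : Fin d) (l : List (Fin d)) :
    Continuous (orbitForm k a l) := by
  induction l with
  | nil => exact continuous_sideForm k a
  | cons b l ih => exact (continuous_sideForm k b).sub (continuous_snd.mul ih)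

/-- The bad set of a given itinerary. -/
def badSet {d : ℕ} [NeZero d] (k a : Fin d) (l : List (Fin d)) : Set ((Fin d → ℂ) × ℝ) :=
  {q | sideForm q.1 k (q.1 a) ≠ 0 ∧ orbitForm k a l q = 0}

lemma badSet_null_s7 {d : ℕ} [NeZero d] (k a : Fin d) (l : List (Fin d)) :
    volume (badSet k a l) = 0 := by
  have hm : MeasurableSet (badSet k a l) :=
    ((isOpen_ne_fun (continuous_sideForm k a) continuous_const).measurableSet).inter
      ((isClosed_eq (continuous_orbitForm k a l) continuous_const).measurableSet)
  rw [Measure.volume_eq_prod, Measure.measure_prod_null hm]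
  refine Eventually.of_forall fun v => ?_
  by_cases h : sideForm v k (v a) = 0
  · have : Prod.mk v ⁻¹' badSet k a l = ∅ := by
      ext t; simp [badSet, h]
    simp [this]
  · have hs : Prod.mk v ⁻¹' badSet k a l ⊆ {t | t ∈ (orbitPoly k a v l).roots.toFinset} := by
      intro t ht
      simp only [badSet, mem_preimage, mem_setOf_eq] at ht ⊢
      rw [Multiset.mem_toFinset, Polynomial.mem_roots (orbitPoly_ne_zero k a v h l),
        Polynomial.IsRoot, orbitPoly_eval]
      exact ht.2
    exact measure_mono_null hs (Finset.measure_zero _ _)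

lemma billiard_step {d : ℕ} [NeZero d] (v : Fin d → ℂ) (lam : ℝ) (z : ℂ)
    (hz : z ∈ ⋃ k : Fin d, cone v k) : ∃ b : Fin d, z ∈ cone v b ∧ ∀ k,
      sideForm v k (billiardMap v lam z) =
        -lam * sideForm v k z + (1 + lam) * sideForm v k (v b) := by
  have h : ∃ k : Fin d, z ∈ cone v k := by simpa using hz
  refine ⟨h.choose, h.choose_spec, fun k => ?_⟩
  rw [billiardMap, dif_pos h]
  simp [sideForm, cross]
  ring

lemma orbit_formula {d : ℕ} [NeZero d] (v : Fin d → ℂ) (lam : ℝ) (x : ℂ) (k : Fin d)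
    (hx : sideForm v k x = 0) (a : Fin d)
    (ha : sideForm v k (billiardMap v lam x) =
        -lam * sideForm v k x + (1 + lam) * sideForm v k (v a)) (n : ℕ)
    (h : ∀ m, m < n + 1 → (billiardMap v lam)^[m] x ∈ ⋃ k : Fin d, cone v k) :
    ∃ l : List (Fin d), sideForm v k ((billiardMap v lam)^[n + 1] x) =
      (1 + lam) * orbitForm k a l (v, lam) := by
  induction n with
  | zero => exact ⟨[], by simp [orbitForm, ha, hx]⟩
  | succ n ih =>
    obtain ⟨l, hl⟩ := ih fun m hm => h m (by omega)
    obtain ⟨b, -, hb⟩ := billiard_step v lam _ (h (n + 1) (by omega))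
    refine ⟨b :: l, ?_⟩
    rw [Function.iterate_succ_apply', hb, hl]
    simp only [orbitForm]
    ring

/-- The set of pairs `(P, λ) ∈ 𝒫_d × (0,1)` for which `T_{P,λ}` has a singular
connection (of some order `n ≥ 2`) has Lebesgue measure zero. -/
theorem singular_connection_measure_zero (d : ℕ) [NeZero d] (hd : 3 ≤ d) :
    volume {q : (Fin d → ℂ) × ℝ | IsConvexPolygon q.1 ∧ q.2 ∈ Set.Ioo (0 : ℝ) 1 ∧
      HasSingularConnection q.1 q.2} = 0 := by
  refine measure_mono_null (t := ⋃ k : Fin d, ⋃ a : Fin d, ⋃ l : List (Fin d), badSet k a l) ?_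
    (measure_iUnion_null fun k => measure_iUnion_null fun a =>
      measure_iUnion_null fun l => badSet_null_s7 k a l)
  rintro ⟨v, lam⟩ ⟨hc, hlam, n, hn, x, horb, -, k, hseg⟩
  obtain ⟨n, rfl⟩ : ∃ m, n = m + 2 := ⟨n - 2, by omega⟩
  simp only [show n + 2 - 1 = n + 1 by omega] at horb hseg
  simp only at hc hlam
  generalize hy : (billiardMap v lam)^[n + 1] x = y at hseg
  have h1 := hseg (left_mem_segment ℝ _ _)
  have h2 := hseg (right_mem_segment ℝ _ _)
  rw [segment_eq_image'] at h1 h2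
  obtain ⟨s, -, hs⟩ := h1
  obtain ⟨t, -, ht⟩ := h2
  have hx : sideForm v k x = 0 := by
    rw [sideForm, ← hs, ← ht]; simp [cross]; ring
  have hyk : sideForm v k y = 0 := by
    rw [sideForm, ← hs, ← ht]; simp [cross]; ring
  have hk : k + 1 ≠ k := by
    intro h
    have h' : (1 : Fin d) = 0 := by simpa using h
    have := congrArg Fin.val h'
    rw [Fin.val_one', Fin.val_zero, Nat.mod_eq_of_lt (by omega)] at this
    omega
  obtain ⟨a, haC, ha⟩ := billiard_step v lam x (horb 0 (by omega))
  have hak : a ≠ k := by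
    rintro rfl
    have := haC _ hk
    rw [← hs, ← ht] at this
    simp [cross] at this
    nlinarith
  have hak1 : a ≠ k + 1 := by
    rintro rfl
    have := haC _ hk.symm
    rw [← hs, ← ht] at this
    simp [cross] at this
    nlinarith
  obtain ⟨l, hl⟩ := orbit_formula v lam x k hx a (ha k) n horb
  rw [hy, hyk] at hl
  simp only [mem_iUnion]
  refine ⟨k, a, l, (hc k a hak hak1).ne', ?_⟩
  have h3 : (1 + lam) ≠ 0 := by have := hlam.1; linarith
  exact (mul_eq_zero.1 hl.symm).resolve_left h3
end
end
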